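/- arXiv:1802.03437 — 2 statements merged into one kernel-verified Lean document; each statement's English description precedes it below -/
import Mathlib

section
/- Let Q be a primitive positive-definite quaternary integer-valued quadratic form with level N(Q), let p be an odd prime, and let n be a positive integer. Suppose Q is isotropic over ℚ_p (i.e. there exists a nonzero x ∈ ℚ_p⁴ with Q(x) = 0) and n is represented by Q over ℤ_p. Then the local density β_p(Q;n) exists and satisfies β_p(Q;n) ≥ (1 − 1/p) · p^(−ord_p(N(Q))), where ord_p denotes the p-adic valuation. -/
open scoped BigOperators

/-- Value of the quadratic form with Gram matrix `A` (symmetric, even diagonal)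
over any commutative ring: `Q(x) = ∑ (aᵢᵢ/2) xᵢ² + ∑_{i<j} aᵢⱼ xᵢ xⱼ`. -/
def Qval {R : Type*} [CommRing R] (A : Matrix (Fin 4) (Fin 4) ℤ) (x : Fin 4 → R) : R :=
  (∑ i, ((A i i / 2 : ℤ) : R) * x i ^ 2) +
    ∑ i, ∑ j ∈ Finset.Ioi i, ((A i j : ℤ) : R) * (x i * x j)

/-- `A` is the Gram matrix of an integer-valued quadratic form. -/
def IsGram (A : Matrix (Fin 4) (Fin 4) ℤ) : Prop :=
  A.IsSymm ∧ ∀ i, 2 ∣ A i i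

/-- The form is primitive: the gcd of its coefficients is 1. -/
def IsPrimitiveQF (A : Matrix (Fin 4) (Fin 4) ℤ) : Prop :=
  ∀ d : ℤ, (∀ i, d ∣ A i i / 2) → (∀ i j, i ≠ j → d ∣ A i j) → IsUnit d

/-- The form is positive definite. -/
def PosDefQF (A : Matrix (Fin 4) (Fin 4) ℤ) : Prop :=
  (A.map (Int.cast : ℤ → ℝ)).PosDef

/-- `N` is the level of the form with Gram matrix `A`: the smallest positive integer
such that `N • A⁻¹` has integer entries and even diagonal. -/
def IsLevel (A : Matrix (Fin 4) (Fin 4) ℤ) (N : ℕ) : Prop :=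
  0 < N ∧
    (∃ B : Matrix (Fin 4) (Fin 4) ℤ,
      B.map (Int.cast : ℤ → ℚ) = (N : ℚ) • (A.map (Int.cast : ℤ → ℚ))⁻¹ ∧ ∀ i, 2 ∣ B i i) ∧
    ∀ M : ℕ, 0 < M →
      (∃ B : Matrix (Fin 4) (Fin 4) ℤ,
        B.map (Int.cast : ℤ → ℚ) = (M : ℚ) • (A.map (Int.cast : ℤ → ℚ))⁻¹ ∧ ∀ i, 2 ∣ B i i) →
      N ≤ M

/-- `n` is represented by the form over `ℤ`. -/
def Represented (A : Matrix (Fin 4) (Fin 4) ℤ) (n : ℕ) : Prop :=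
  ∃ x : Fin 4 → ℤ, Qval A x = (n : ℤ)

/-- `n` is locally represented: representable over `ℤ_p` for every prime `p`. -/
def LocallyRepresented (A : Matrix (Fin 4) (Fin 4) ℤ) (n : ℕ) : Prop :=
  ∀ (p : ℕ) [Fact p.Prime], ∃ x : Fin 4 → ℤ_[p], Qval A x = (n : ℤ_[p])

/-- Number of solutions of `Q(x) ≡ n mod p^k`. -/
noncomputable def localCount (A : Matrix (Fin 4) (Fin 4) ℤ) (p n k : ℕ) : ℕ :=
  Nat.card {x : Fin 4 → ZMod (p ^ k) // Qval A x = (n : ZMod (p ^ k))}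

/-- The local density `β_p(Q;n)` exists and is at least `c`. -/
def DensityBound (A : Matrix (Fin 4) (Fin 4) ℤ) (p n : ℕ) (c : ℝ) : Prop :=
  ∃ β : ℝ,
    Filter.Tendsto (fun k => (localCount A p n k : ℝ) / (p : ℝ) ^ (3 * k))
      Filter.atTop (nhds β) ∧ c ≤ β



namespace LD

/-- Counting through the fibres of an additive homomorphism. -/
theorem card_fiber {G H : Type*} [AddCommGroup G] [AddCommGroup H] (φ : G →+ H) (P : H → Prop) :
    Nat.card {g // P (φ g)} =
      Nat.card φ.ker * Nat.card {h // (∃ g, φ g = h) ∧ P h} := by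
  classical
  let s : {h // (∃ g, φ g = h) ∧ P h} → G := fun h => h.2.1.choose
  have hs : ∀ h, φ (s h) = h.1 := fun h => h.2.1.choose_spec
  rw [← Nat.card_prod]
  refine Nat.card_congr
    { toFun := fun g => (⟨g.1 - s ⟨φ g.1, ⟨g.1, rfl⟩, g.2⟩, by
          rw [AddMonoidHom.mem_ker, map_sub, hs, sub_self]⟩, ⟨φ g.1, ⟨g.1, rfl⟩, g.2⟩)
      invFun := fun q => ⟨q.1.1 + s q.2, by
          have h1 : φ q.1.1 = 0 := q.1.2
          rw [map_add, hs, h1, zero_add]; exact q.2.2.2⟩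
      left_inv := fun g => by simp
      right_inv := ?_ }
  rintro ⟨⟨k, hk⟩, ⟨h, hh⟩⟩
  have h1 : φ k = 0 := hk
  have h2 : (⟨φ (k + s ⟨h, hh⟩), ⟨_, rfl⟩, by
      rw [map_add, hs, h1, zero_add]; exact hh.2⟩ : {h // (∃ g, φ g = h) ∧ P h}) = ⟨h, hh⟩ := by
    apply Subtype.ext
    simp [hs, h1]
  apply Prod.ext
  · apply Subtype.ext
    simp only [h2, add_sub_cancel_right]
  · exact h2

theorem card_fiber_surj {G H : Type*} [AddCommGroup G] [AddCommGroup H] (φ : G →+ H)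
    (hφ : Function.Surjective φ) (P : H → Prop) :
    Nat.card {g // P (φ g)} = Nat.card φ.ker * Nat.card {h // P h} := by
  rw [card_fiber]
  congr 1
  exact Nat.card_congr (Equiv.subtypeEquivRight fun h => by simp [hφ h])

theorem card_fiber_one {G H : Type*} [AddCommGroup G] [AddCommGroup H] (φ : G →+ H)
    (hφ : Function.Surjective φ) (a : H) :
    Nat.card {g // φ g = a} = Nat.card φ.ker := by
  rw [card_fiber_surj φ hφ (fun h => h = a)]
  simp

theorem card_total {G H : Type*} [AddCommGroup G] [AddCommGroup H] (φ : G →+ H)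
    (hφ : Function.Surjective φ) :
    Nat.card G = Nat.card φ.ker * Nat.card H := by
  have := card_fiber_surj φ hφ (fun _ => True)
  simpa using this

/-- Diagonal form. -/
def dg {R : Type*} [CommRing R] (d x : Fin 4 → R) : R := ∑ i, d i * x i ^ 2

theorem map_dg {R S : Type*} [CommRing R] [CommRing S] (f : R →+* S) (d x : Fin 4 → R) :
    f (dg d x) = dg (fun i => f (d i)) (fun i => f (x i)) := by
  simp [dg]

theorem hensel_fiber {R F : Type*} [CommRing R] [Field F] [Finite R] (π : R →+* F)
    (hπ : Function.Surjective π) (hloc : ∀ x, π x ≠ 0 → IsUnit x) (h2 : (2 : F) ≠ 0)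
    (d : Fin 4 → R) (n : R) (a : Fin 4 → F) (ha : dg (fun i => π (d i)) a = π n)
    (i : Fin 4) (hi : π (d i) * a i ≠ 0) :
    Nat.card {x : Fin 4 → R // (∀ j, π (x j) = a j) ∧ dg d x = n} =
      Nat.card (π : R →+ F).ker ^ 3 := by
  classical
  have hfib : ∀ b : F, Nat.card {y : R // π y = b} = Nat.card (π : R →+ F).ker :=
    fun b => card_fiber_one (π : R →+ F) hπ b
  have hpi : ∀ b : Fin 4 → F, Nat.card {x : Fin 4 → R // ∀ j, π (x j) = b j} =
      Nat.card (π : R →+ F).ker ^ 4 := by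
    intro b
    rw [Nat.card_congr (Equiv.subtypePiEquivPi (p := fun j y => π y = b j)), Nat.card_pi]
    simp [hfib]
  let b : Fin 4 → F := Function.update a i (π n)
  let Φ : {x : Fin 4 → R // ∀ j, π (x j) = a j} → {x : Fin 4 → R // ∀ j, π (x j) = b j} :=
    fun x => ⟨Function.update x.1 i (dg d x.1), by
      intro j
      by_cases hj : j = i
      · subst hj
        simp only [b, Function.update_self, map_dg, x.2, ha]
      · simp only [b, Function.update_of_ne hj, x.2]⟩
  have hΦ : Function.Injective Φ := by
    intro x y hxy
    have h := congrArg Subtype.val hxy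
    have hne : ∀ j, j ≠ i → x.1 j = y.1 j := by
      intro j hj
      have := congrFun h j
      simpa [Φ, Function.update_of_ne hj] using this
    have hq : dg d x.1 = dg d y.1 := by
      have := congrFun h i
      simpa [Φ] using this
    have hi' : d i * (x.1 i + y.1 i) * (x.1 i - y.1 i) = 0 := by
      have e : dg d x.1 - dg d y.1 = d i * x.1 i ^ 2 - d i * y.1 i ^ 2 := by
        unfold dg
        rw [← Finset.sum_sub_distrib]
        apply Finset.sum_eq_single i
        · intro j _ hj
          rw [hne j hj, sub_self]
        · simp
      rw [hq, sub_self] at e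
      linear_combination -e
    have hu : IsUnit (d i * (x.1 i + y.1 i)) := by
      apply hloc
      rw [map_mul, map_add, x.2, y.2, ← two_mul]
      intro h0
      apply hi
      have : (2 : F) * (π (d i) * a i) = 0 := by linear_combination h0
      exact (mul_eq_zero.1 this).resolve_left h2
    have hxi : x.1 i = y.1 i := by
      rw [← sub_eq_zero]
      exact (hu.mul_right_eq_zero).1 hi'
    apply Subtype.ext
    funext j
    by_cases hj : j = i
    · rw [hj, hxi]
    · exact hne j hj
  have hbij : Function.Bijective Φ := hΦ.bijective_of_nat_card_le (by rw [hpi, hpi])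
  have e1 : Nat.card {x : Fin 4 → R // (∀ j, π (x j) = a j) ∧ dg d x = n} =
      Nat.card {y : Fin 4 → R // ∀ j, π (y j) = b j ∧ (j = i → y j = n)} := by
    apply Nat.card_eq_of_bijective (f := fun x => ⟨(Φ ⟨x.1, x.2.1⟩).1, fun j =>
      ⟨(Φ ⟨x.1, x.2.1⟩).2 j, by rintro rfl; simp [Φ, x.2.2]⟩⟩)
    constructor
    · intro x y h
      have h0 := congrArg Subtype.val h
      have h1 : Φ ⟨x.1, x.2.1⟩ = Φ ⟨y.1, y.2.1⟩ := Subtype.ext h0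
      have h3 := congrArg Subtype.val (hΦ h1)
      exact Subtype.ext h3
    · rintro ⟨y, hy⟩
      obtain ⟨x, hx⟩ := hbij.2 ⟨y, fun j => (hy j).1⟩
      have hx' := congrArg Subtype.val hx
      refine ⟨⟨x.1, x.2, ?_⟩, Subtype.ext hx'⟩
      have h4 := congrFun hx' i
      simp only [Φ, Function.update_self] at h4
      rw [h4]
      exact (hy i).2 rfl
  rw [e1, Nat.card_congr (Equiv.subtypePiEquivPi (p := fun j y => π y = b j ∧ (j = i → y = n))),
    Nat.card_pi]
  have hc : ∀ j, Nat.card {y : R // π y = b j ∧ (j = i → y = n)} =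
      if j = i then 1 else Nat.card (π : R →+ F).ker := by
    intro j
    split_ifs with hj
    · subst hj
      have : ∀ y, (π y = b j ∧ (j = j → y = n)) ↔ y = n := by
        intro y
        constructor
        · intro h; exact h.2 rfl
        · rintro rfl; simp [b]
      rw [Nat.card_congr (Equiv.subtypeEquivRight this)]
      simp
    · rw [← hfib (b j)]
      exact Nat.card_congr (Equiv.subtypeEquivRight fun y => by simp [hj])
  simp only [hc]
  rw [Finset.prod_ite, Finset.prod_const_one, one_mul, Finset.prod_const, Finset.filter_ne',
    Finset.card_erase_of_mem (Finset.mem_univ _), Finset.card_univ, Fintype.card_fin]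

/-- Number of nonsingular solutions over a finite field. -/
noncomputable def nsc {F : Type*} [CommRing F] (f : Fin 4 → F) (m : F) : ℕ :=
  Nat.card {x : Fin 4 → F // dg f x = m ∧ ∃ i, f i * x i ≠ 0}

theorem hensel {R F : Type*} [CommRing R] [Field F] [Finite R] [Finite F] (π : R →+* F)
    (hπ : Function.Surjective π) (hloc : ∀ x, π x ≠ 0 → IsUnit x) (h2 : (2 : F) ≠ 0)
    (d : Fin 4 → R) (n : R) :
    Nat.card {x : Fin 4 → R // dg d x = n ∧ ∃ i, π (d i) * π (x i) ≠ 0} =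
      Nat.card (π : R →+ F).ker ^ 3 * nsc (fun i => π (d i)) (π n) := by
  classical
  have e : {x : Fin 4 → R // dg d x = n ∧ ∃ i, π (d i) * π (x i) ≠ 0} ≃
      Σ a : {a : Fin 4 → F // dg (fun i => π (d i)) a = π n ∧ ∃ i, π (d i) * a i ≠ 0},
        {x : Fin 4 → R // (∀ j, π (x j) = a.1 j) ∧ dg d x = n} :=
    { toFun := fun x => ⟨⟨fun j => π (x.1 j), (map_dg π d x.1).symm.trans (congrArg π x.2.1), x.2.2⟩,
          ⟨x.1, fun _ => rfl, x.2.1⟩⟩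
      invFun := fun q => ⟨q.2.1, q.2.2.2, by
          obtain ⟨i, hi⟩ := q.1.2.2
          exact ⟨i, by rw [q.2.2.1]; exact hi⟩⟩
      left_inv := fun x => rfl
      right_inv := by
        rintro ⟨⟨a, ha⟩, ⟨x, hx, hx'⟩⟩
        obtain rfl : (fun j => π (x j)) = a := funext hx
        rfl }
  have : Fintype {a : Fin 4 → F // dg (fun i => π (d i)) a = π n ∧ ∃ i, π (d i) * a i ≠ 0} :=
    Fintype.ofFinite _
  rw [Nat.card_congr e, Nat.card_sigma]
  rw [Finset.sum_congr rfl (g := fun _ => Nat.card (π : R →+ F).ker ^ 3)]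
  · rw [Finset.sum_const, Finset.card_univ, ← Nat.card_eq_fintype_card, smul_eq_mul, mul_comm, nsc]
  · rintro ⟨a, ha, i, hi⟩ _
    exact hensel_fiber π hπ hloc h2 d n a ha i hi

/-! ### Counting over finite fields -/

section FF
variable {F : Type*} [Field F] [Finite F]

/-- isotropic mod the radical -/
def Iso (f : Fin 4 → F) : Prop := ∃ v, dg f v = 0 ∧ ∃ i, f i * v i ≠ 0

theorem nsc_iso (h2 : (2 : F) ≠ 0) (f : Fin 4 → F) (hf : Iso f) (m : F) :
    Nat.card F ^ 3 ≤ nsc f m + Nat.card F ^ 2 := by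
  classical
  obtain ⟨v, hv, i₀, hi₀⟩ := hf
  let ℓ : (Fin 4 → F) →+ F :=
    { toFun := fun x => ∑ i, f i * v i * x i
      map_zero' := by simp
      map_add' := fun x y => by simp [mul_add, Finset.sum_add_distrib] }
  have hℓ : ∀ x, ℓ x = ∑ i, f i * v i * x i := fun _ => rfl
  have hsurj : Function.Surjective ℓ := by
    intro c
    refine ⟨Pi.single i₀ (c / (f i₀ * v i₀)), ?_⟩
    rw [hℓ, Finset.sum_eq_single i₀]
    · rw [Pi.single_eq_same, mul_div_cancel₀ _ hi₀]
    · intro j _ hj; simp [Pi.single_eq_of_ne hj]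
    · simp
  have hq : ∀ x t, dg f (x + t • v) = dg f x + 2 * t * ℓ x := by
    intro x t
    have : dg f (x + t • v) = dg f x + 2 * t * ℓ x + t ^ 2 * dg f v := by
      simp only [dg, hℓ, Fin.sum_univ_four, Pi.add_apply, Pi.smul_apply, smul_eq_mul]
      ring
    rw [this, hv]; ring
  have hℓv : ℓ v = 0 := by
    rw [hℓ, ← hv]; unfold dg
    exact Finset.sum_congr rfl fun i _ => by ring
  have hq4 : Nat.card (Fin 4 → F) = Nat.card F ^ 4 := by
    rw [Nat.card_pi]; simp
  have hF : 0 < Nat.card F := Nat.card_pos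
  have hker : Nat.card ℓ.ker = Nat.card F ^ 3 := by
    have := card_total ℓ hsurj
    rw [hq4] at this
    apply Nat.eq_of_mul_eq_mul_right hF
    rw [← this]; ring
  have hne : Nat.card {x // ℓ x ≠ 0} + Nat.card F ^ 3 = Nat.card F ^ 4 := by
    rw [← hker, ← hq4]
    have : Nat.card ℓ.ker = Nat.card {x // ℓ x = 0} := rfl
    rw [this, add_comm, ← Nat.card_sum]
    exact Nat.card_congr (Equiv.sumCompl _)
  have hle : Nat.card {x // ℓ x ≠ 0} ≤ nsc f m * Nat.card F := by
    rw [nsc, ← Nat.card_prod]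
    let g : {x // ℓ x ≠ 0} →
        {x : Fin 4 → F // dg f x = m ∧ ∃ i, f i * x i ≠ 0} × F := fun x =>
      (⟨x.1 + ((m - dg f x.1) / (2 * ℓ x.1)) • v, by
        have hx := x.2
        refine ⟨by rw [hq]; field_simp; ring, ?_⟩
        by_contra hcon
        push Not at hcon
        apply hx
        have h5 : ℓ (x.1 + ((m - dg f x.1) / (2 * ℓ x.1)) • v) = ℓ x.1 := by
          have : ∀ t : F, ℓ (t • v) = t * ℓ v := by
            intro t
            simp only [hℓ, Finset.mul_sum, Pi.smul_apply, smul_eq_mul]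
            exact Finset.sum_congr rfl fun i _ => by ring
          rw [map_add, this, hℓv, mul_zero, add_zero]
        rw [← h5, hℓ]
        apply Finset.sum_eq_zero
        intro i _
        rw [mul_right_comm, hcon i, zero_mul]⟩, (m - dg f x.1) / (2 * ℓ x.1))
    apply Nat.card_le_card_of_injective g
    intro x y h
    have h1 := congrArg (fun q => q.1.1) h
    have h3 := congrArg Prod.snd h
    simp only [g] at h1 h3
    rw [h3] at h1
    exact Subtype.ext (add_right_cancel h1)
  have : Nat.card F ^ 3 * Nat.card F ≤ (nsc f m + Nat.card F ^ 2) * Nat.card F := by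
    calc Nat.card F ^ 3 * Nat.card F = Nat.card {x // ℓ x ≠ 0} + Nat.card F ^ 3 := by
          rw [hne]; ring
      _ ≤ nsc f m * Nat.card F + Nat.card F ^ 3 := by gcongr
      _ = _ := by ring
  exact Nat.le_of_mul_le_mul_right this hF

theorem iso_of_three (hodd : Nat.card F % 2 = 1) (f : Fin 4 → F) (i j k : Fin 4) (hij : i ≠ j)
    (hik : i ≠ k) (hjk : j ≠ k) (hi : f i ≠ 0) (hj : f j ≠ 0) (hk : f k ≠ 0) : Iso f := by
  classical
  have : Fintype F := Fintype.ofFinite F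
  obtain ⟨a, b, hab⟩ := FiniteField.exists_root_sum_quadratic
    (f := Polynomial.C (f i) * Polynomial.X ^ 2) 
    (g := Polynomial.C (f j) * Polynomial.X ^ 2 + Polynomial.C (f k))
    (by rw [Polynomial.degree_C_mul_X_pow 2 hi]; rfl)
    (by
      have := Polynomial.degree_quadratic (b := 0) (c := f k) hj
      simpa using this)
    (by rw [← Nat.card_eq_fintype_card]; exact hodd)
  simp at hab
  refine ⟨Function.update (Function.update (Pi.single i a) j b) k 1, ?_, k, by simpa using hk⟩
  unfold dg
  rw [← Finset.sum_subset (Finset.subset_univ {i, j, k})]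
  · rw [Finset.sum_insert (by simp [hij, hik]), Finset.sum_insert (by simp [hjk]),
      Finset.sum_singleton]
    simp [Function.update_of_ne hij, Function.update_of_ne hik, Function.update_of_ne hjk]
    linear_combination hab
  · intro l _ hl
    simp at hl
    simp [Function.update_of_ne hl.2.2, Function.update_of_ne hl.2.1, Pi.single_eq_of_ne hl.1]

theorem card_compl_two : ∀ i j : Fin 4, i ≠ j →
    Fintype.card {k : Fin 4 // k ≠ i ∧ k ≠ j} = 2 := by decide

theorem nsc_aniso (h2 : (2 : F) ≠ 0) (f : Fin 4 → F) (hf : ¬ Iso f) (m : F) (hm : m ≠ 0)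
    (i j : Fin 4) (hij : i ≠ j) (hi : f i ≠ 0) (hk : ∀ k, k ≠ i → k ≠ j → f k = 0)
    (w : Fin 4 → F) (hw : dg f w = m) :
    Nat.card F ^ 3 ≤ nsc f m := by
  classical
  -- values
  have hval : ∀ x, dg f x = f i * x i ^ 2 + f j * x j ^ 2 := by
    intro x
    unfold dg
    rw [← Finset.sum_subset (Finset.subset_univ {i, j}), Finset.sum_pair hij]
    intro k _ hk'
    simp at hk'
    rw [hk k hk'.1 hk'.2, zero_mul]
  let q : F → F := fun t => f i + f j * t ^ 2
  have hq : ∀ t, q t ≠ 0 := by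
    intro t ht
    apply hf
    refine ⟨Function.update (Pi.single i 1) j t, ?_, i, ?_⟩
    · rw [hval]; simpa [Function.update_of_ne hij] using ht
    · simpa [Function.update_of_ne hij] using hi
  let B : F → F := fun t => f i * w i + f j * w j * t
  let c : F → F := fun t => 2 * B t / q t
  let S := {x : Fin 4 → F // dg f x = m ∧ ∃ i, f i * x i ≠ 0}
  have hwm : f i * w i ^ 2 + f j * w j ^ 2 = m := by rw [← hval, hw]
  let g : F × ({k : Fin 4 // k ≠ i ∧ k ≠ j} → F) → S := fun z =>
    ⟨fun k => if h : k ≠ i ∧ k ≠ j then z.2 ⟨k, h⟩ else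
      if k = i then w i - c z.1 else w j - c z.1 * z.1, by
      have hd : ∀ x : Fin 4 → F, dg f x = m → dg f x = m ∧ ∃ i, f i * x i ≠ 0 := by
        intro x hx
        refine ⟨hx, ?_⟩
        by_contra hcon
        push Not at hcon
        apply hm
        rw [← hx]
        unfold dg
        apply Finset.sum_eq_zero
        intro i _
        rw [pow_two, ← mul_assoc, hcon i, zero_mul]
      apply hd
      rw [hval]
      simp [hij.symm]
      have hqt := hq z.1
      have hcq : c z.1 * q z.1 = 2 * B z.1 := by simp only [c]; field_simp
      simp only [q, B] at hcq
      linear_combination hwm + c z.1 * hcq⟩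
  have hg : Function.Injective g := by
    rintro ⟨t, z⟩ ⟨s, y⟩ h
    have h' := congrArg Subtype.val h
    have hi1 : w i - c t = w i - c s := by simpa [g] using congrFun h' i
    have hj1 : w j - c t * t = w j - c s * s := by simpa [g, hij.symm] using congrFun h' j
    have hc : c t = c s := by linear_combination -hi1
    have hts : t = s := by
      by_contra hne
      have h0 : c t = 0 := by
        have : c t * (t - s) = 0 := by rw [← hc] at hj1; linear_combination -hj1
        exact (mul_eq_zero.1 this).resolve_right (sub_ne_zero.2 hne)
      have hB : ∀ r, c r = 0 → B r = 0 := by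
        intro r hr
        have hqr := hq r
        have : (2 : F) * B r = 0 := by
          have hcq : c r * q r = 2 * B r := by simp only [c]; field_simp
          rw [← hcq, hr, zero_mul]
        exact (mul_eq_zero.1 this).resolve_left h2
      have hBt := hB t h0
      have hBs := hB s (hc ▸ h0)
      simp only [B] at hBt hBs
      have h6 : f j * w j = 0 := by
        have : f j * w j * (t - s) = 0 := by linear_combination hBt - hBs
        exact (mul_eq_zero.1 this).resolve_right (sub_ne_zero.2 hne)
      have h7 : f i * w i = 0 := by linear_combination hBt - t * h6
      apply hm
      linear_combination -hwm + w i * h7 + w j * h6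
    subst hts
    congr 1
    funext k
    have := congrFun h' k.1
    simpa [g, k.2.1, k.2.2] using this
  have hcard : Nat.card (F × ({k : Fin 4 // k ≠ i ∧ k ≠ j} → F)) = Nat.card F ^ 3 := by
    rw [Nat.card_prod, Nat.card_pi, Finset.prod_const, Finset.card_univ]
    have : Fintype.card {k : Fin 4 // k ≠ i ∧ k ≠ j} = 2 := by
      exact (Fintype.card_congr (Equiv.refl _)).trans (card_compl_two i j hij)
    rw [this]; ring
  rw [← hcard]
  exact Nat.card_le_card_of_injective g hg

end FF
end LD


namespace LD

section Padic
set_option linter.unusedSectionVars false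
variable {p : ℕ} [hp : Fact p.Prime]

noncomputable def cnt (d : Fin 4 → ℤ_[p]) (n : ℤ_[p]) (k : ℕ) : ℕ :=
  Nat.card {x : Fin 4 → ZMod (p ^ k) //
    dg (fun i => PadicInt.toZModPow k (d i)) x = PadicInt.toZModPow k n}

theorem toZMod_eq_zero (x : ℤ_[p]) : PadicInt.toZMod x = 0 ↔ (p : ℤ_[p]) ∣ x := by
  rw [← RingHom.mem_ker, PadicInt.ker_toZMod, PadicInt.maximalIdeal_eq_span_p,
    Ideal.mem_span_singleton]

/-- reduction to the residue field -/
def rho (p k : ℕ) : ZMod (p ^ (k + 1)) →+* ZMod p :=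
  ZMod.castHom (dvd_pow_self p (Nat.succ_ne_zero k)) (ZMod p)

/-- reduction by one level -/
def red (p k : ℕ) : ZMod (p ^ (k + 1)) →+* ZMod (p ^ k) :=
  ZMod.castHom (pow_dvd_pow p (Nat.le_succ k)) (ZMod (p ^ k))

theorem rho_toZModPow (k : ℕ) (x : ℤ_[p]) :
    rho p k (PadicInt.toZModPow (k + 1) x) = PadicInt.toZMod x := by
  obtain ⟨c, hc⟩ := Ideal.mem_span_singleton.1
    (PadicInt.maximalIdeal_eq_span_p (p := p) ▸ PadicInt.sub_zmodRepr_mem x)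
  have hx : x = x.zmodRepr + p * c := by rw [← hc]; ring
  generalize x.zmodRepr = r at hx
  subst hx
  simp only [map_add, map_mul, map_natCast, CharP.cast_eq_zero, zero_mul]

theorem red_toZModPow (k : ℕ) (x : ℤ_[p]) :
    red p k (PadicInt.toZModPow (k + 1) x) = PadicInt.toZModPow k x := by
  have := PadicInt.zmod_cast_comp_toZModPow (p := p) k (k + 1) (Nat.le_succ k)
  exact congrArg (fun f => f x) this

theorem rho_surj (k : ℕ) : Function.Surjective (rho p k) := ZMod.castHom_surjective _
theorem red_surj (k : ℕ) : Function.Surjective (red p k) := ZMod.castHom_surjective _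

theorem natCast_surj (k : ℕ) (x : ZMod (p ^ k)) : ∃ a : ℕ, (a : ZMod (p ^ k)) = x := by
  have : NeZero (p ^ k) := ⟨pow_ne_zero _ hp.1.ne_zero⟩
  exact ⟨x.val, ZMod.natCast_zmod_val x⟩

theorem rho_loc (k : ℕ) (x : ZMod (p ^ (k + 1))) (hx : rho p k x ≠ 0) : IsUnit x := by
  obtain ⟨a, rfl⟩ := natCast_surj (k + 1) x
  rw [map_natCast, Ne, ZMod.natCast_eq_zero_iff] at hx
  rw [ZMod.isUnit_iff_coprime]
  exact Nat.Coprime.pow_right _ ((Nat.Prime.coprime_iff_not_dvd hp.1).2 hx).symm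

theorem p_mul_eq_zero (k : ℕ) (x : ZMod (p ^ (k + 1))) :
    (p : ZMod (p ^ (k + 1))) * x = 0 ↔ red p k x = 0 := by
  obtain ⟨a, rfl⟩ := natCast_surj (k + 1) x
  rw [map_natCast, ← Nat.cast_mul, ZMod.natCast_eq_zero_iff, ZMod.natCast_eq_zero_iff, pow_succ',
    Nat.mul_dvd_mul_iff_left hp.1.pos]

theorem rho_eq_zero (k : ℕ) (x : ZMod (p ^ (k + 1))) :
    rho p k x = 0 ↔ ∃ y, (p : ZMod (p ^ (k + 1))) * y = x := by
  constructor
  · obtain ⟨a, rfl⟩ := natCast_surj (k + 1) x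
    rw [map_natCast, ZMod.natCast_eq_zero_iff]
    rintro ⟨b, rfl⟩
    exact ⟨b, by push_cast; rfl⟩
  · rintro ⟨y, rfl⟩
    simp

theorem ker_rho (k : ℕ) : Nat.card ((rho p k : ZMod (p ^ (k + 1)) →+* ZMod p) :
    ZMod (p ^ (k + 1)) →+ ZMod p).ker = p ^ k := by
  have := card_total ((rho p k : ZMod (p ^ (k + 1)) →+* ZMod p) :
    ZMod (p ^ (k + 1)) →+ ZMod p) (rho_surj k)
  rw [Nat.card_zmod, Nat.card_zmod] at this
  exact (Nat.eq_of_mul_eq_mul_right hp.1.pos ((pow_succ p k).symm.trans this)).symm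

theorem card_p_mul (k : ℕ) :
    Nat.card {x : ZMod (p ^ (k + 1)) // (p : ZMod (p ^ (k + 1))) * x = 0} = p := by
  have := card_total ((red p k : ZMod (p ^ (k + 1)) →+* ZMod (p ^ k)) :
    ZMod (p ^ (k + 1)) →+ ZMod (p ^ k)) (red_surj k)
  rw [Nat.card_zmod, Nat.card_zmod] at this
  have h2 := (Nat.eq_of_mul_eq_mul_right (pow_pos hp.1.pos k)
    ((pow_succ' p k).symm.trans this)).symm
  refine Eq.trans ?_ h2
  exact Nat.card_congr (Equiv.subtypeEquivRight fun x => p_mul_eq_zero k x)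

theorem two_ne (hodd : p ≠ 2) : (2 : ZMod p) ≠ 0 := by
  intro h
  have h' : ((2 : ℕ) : ZMod p) = 0 := by exact_mod_cast h
  rw [ZMod.natCast_eq_zero_iff] at h'
  exact hodd ((Nat.prime_dvd_prime_iff_eq hp.1 Nat.prime_two).1 h')

theorem cnt_ns (hodd : p ≠ 2) (d : Fin 4 → ℤ_[p]) (n : ℤ_[p]) (k : ℕ) :
    Nat.card {x : Fin 4 → ZMod (p ^ (k + 1)) //
      dg (fun i => PadicInt.toZModPow (k + 1) (d i)) x = PadicInt.toZModPow (k + 1) n ∧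
      ∃ i, PadicInt.toZMod (d i) * rho p k (x i) ≠ 0} =
    p ^ (3 * k) * nsc (fun i => PadicInt.toZMod (d i)) (PadicInt.toZMod n) := by
  have : NeZero (p ^ (k + 1)) := ⟨pow_ne_zero _ hp.1.ne_zero⟩
  have h := hensel (rho p k) (rho_surj k) (rho_loc k) (two_ne hodd)
    (fun i => PadicInt.toZModPow (k + 1) (d i)) (PadicInt.toZModPow (k + 1) n)
  rw [ker_rho, ← pow_mul, mul_comm k 3] at h
  simpa only [rho_toZModPow] using h

/-- Number of singular solutions. -/
noncomputable def sing (d : Fin 4 → ℤ_[p]) (n : ℤ_[p]) (k : ℕ) : ℕ :=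
  Nat.card {x : Fin 4 → ZMod (p ^ (k + 1)) //
        (∀ i, PadicInt.toZMod (d i) * rho p k (x i) = 0) ∧
        dg (fun i => PadicInt.toZModPow (k + 1) (d i)) x = PadicInt.toZModPow (k + 1) n}

theorem cnt_split (hodd : p ≠ 2) (d : Fin 4 → ℤ_[p]) (n : ℤ_[p]) (k : ℕ) :
    cnt d n (k + 1) = p ^ (3 * k) * nsc (fun i => PadicInt.toZMod (d i)) (PadicInt.toZMod n) +
      sing d n k := by
  classical
  have : NeZero (p ^ (k + 1)) := ⟨pow_ne_zero _ hp.1.ne_zero⟩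
  rw [← cnt_ns hodd, sing, ← Nat.card_sum, cnt]
  let P : {x : Fin 4 → ZMod (p ^ (k + 1)) //
    dg (fun i => PadicInt.toZModPow (k + 1) (d i)) x = PadicInt.toZModPow (k + 1) n} → Prop :=
    fun x => ∃ i, PadicInt.toZMod (d i) * rho p k (x.1 i) ≠ 0
  rw [← Nat.card_congr (Equiv.sumCompl P), Nat.card_sum, Nat.card_sum]
  congr 1
  · exact Nat.card_congr (Equiv.subtypeSubtypeEquivSubtypeInter _
      (fun x : Fin 4 → ZMod (p ^ (k + 1)) =>
        ∃ i, PadicInt.toZMod (d i) * rho p k (x i) ≠ 0))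
  · refine (Nat.card_congr (Equiv.subtypeSubtypeEquivSubtypeInter _
      (fun x : Fin 4 → ZMod (p ^ (k + 1)) => ¬ ∃ i, PadicInt.toZMod (d i) * rho p k (x i) ≠ 0))).trans ?_
    exact Nat.card_congr (Equiv.subtypeEquivRight fun x => by
      push Not
      exact and_comm)

theorem cnt_unit (hodd : p ≠ 2) (d : Fin 4 → ℤ_[p]) (n : ℤ_[p]) (hn : ¬ (p : ℤ_[p]) ∣ n) (k : ℕ) :
    cnt d n (k + 1) =
      p ^ (3 * k) * nsc (fun i => PadicInt.toZMod (d i)) (PadicInt.toZMod n) := by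
  rw [cnt_split hodd]
  simp only [Nat.add_eq_left]
  rw [sing, Nat.card_eq_zero]
  left
  constructor
  rintro ⟨x, hx, hq⟩
  apply hn
  rw [← toZMod_eq_zero, ← rho_toZModPow k, ← hq, map_dg]
  unfold dg
  apply Finset.sum_eq_zero
  intro i _
  beta_reduce
  rw [rho_toZModPow, pow_two, ← mul_assoc, hx, zero_mul]

theorem cnt_sing (d d' : Fin 4 → ℤ_[p]) (U : Finset (Fin 4)) (hU : ∀ i, i ∈ U ↔ ¬ (p : ℤ_[p]) ∣ d i)
    (h1 : ∀ i ∈ U, d' i = p * d i) (h2 : ∀ i ∉ U, d i = p * d' i) (n : ℤ_[p]) (k : ℕ) :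
    p ^ U.card * sing d ((p : ℤ_[p]) * n) k =
      p ^ 4 * cnt d' n k := by
  classical
  have : NeZero (p ^ (k + 1)) := ⟨pow_ne_zero _ hp.1.ne_zero⟩
  set R := ZMod (p ^ (k + 1)) with hR
  let f : ℤ_[p] →+* R := PadicInt.toZModPow (k + 1)
  let φ : (Fin 4 → R) →+ (Fin 4 → R) :=
    { toFun := fun y i => if i ∈ U then (p : R) * y i else y i
      map_zero' := by funext i; simp
      map_add' := fun x y => by funext i; by_cases hi : i ∈ U <;> simp [hi, mul_add] }
  have hφ : ∀ y i, φ y i = if i ∈ U then (p : R) * y i else y i := fun _ _ => rfl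
  let ψ : (Fin 4 → R) →+ (Fin 4 → ZMod (p ^ k)) :=
    { toFun := fun y i => red p k (y i)
      map_zero' := by funext i; simp
      map_add' := fun x y => by funext i; simp }
  have hψ : ∀ y i, ψ y i = red p k (y i) := fun _ _ => rfl
  have hψs : Function.Surjective ψ := by
    intro z
    choose y hy using fun i => red_surj (p := p) k (z i)
    exact ⟨y, funext hy⟩
  have kφ : Nat.card φ.ker = p ^ U.card := by
    have e : Nat.card φ.ker = Nat.card {y : Fin 4 → R // ∀ i, if i ∈ U then (p : R) * y i = 0
        else y i = 0} := by
      apply Nat.card_congr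
      apply Equiv.subtypeEquivRight
      intro y
      rw [AddMonoidHom.mem_ker, funext_iff]
      apply forall_congr'
      intro i
      rw [hφ]
      by_cases hi : i ∈ U <;> simp [hi]
    rw [e, Nat.card_congr (Equiv.subtypePiEquivPi
      (p := fun i (y : R) => if i ∈ U then (p : R) * y = 0 else y = 0)), Nat.card_pi]
    have : ∀ i, Nat.card {y : R // if i ∈ U then (p : R) * y = 0 else y = 0} =
        if i ∈ U then p else 1 := by
      intro i
      by_cases hi : i ∈ U
      · simp only [hi, if_true]; exact card_p_mul k
      · simp [hi]
    simp only [this]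
    rw [Finset.prod_ite]
    simp
  have kψ : Nat.card ψ.ker = p ^ 4 := by
    have := card_total ψ hψs
    rw [Nat.card_pi, Nat.card_pi] at this
    simp only [Nat.card_zmod, Finset.prod_const, Finset.card_univ, Fintype.card_fin, hR] at this
    apply Nat.eq_of_mul_eq_mul_right (pow_pos (pow_pos hp.1.pos k) 4)
    rw [← this]
    ring
  have hd : ∀ y, dg (fun i => f (d i)) (φ y) = p * dg (fun i => f (d' i)) y := by
    intro y
    unfold dg
    rw [Finset.mul_sum]
    apply Finset.sum_congr rfl
    intro i _
    rw [hφ]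
    beta_reduce
    by_cases hi : i ∈ U
    · rw [if_pos hi, h1 i hi, map_mul, map_natCast]; ring
    · rw [if_neg hi, h2 i hi, map_mul, map_natCast]; ring
  have c1 := card_fiber φ (fun x => dg (fun i => f (d i)) x = f (p * n))
  have c2 := card_fiber_surj ψ hψs
    (fun x => dg (fun i => PadicInt.toZModPow k (d' i)) x = PadicInt.toZModPow k n)
  rw [kφ] at c1
  rw [kψ] at c2
  have c3 : Nat.card {g // dg (fun i => f (d i)) (φ g) = f (p * n)} =
      Nat.card {g // dg (fun i => PadicInt.toZModPow k (d' i)) (ψ g) = PadicInt.toZModPow k n} := by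
    apply Nat.card_congr
    apply Equiv.subtypeEquivRight
    intro y
    rw [hd, map_mul, map_natCast, ← sub_eq_zero, ← mul_sub, p_mul_eq_zero, map_sub, map_dg,
      sub_eq_zero]
    have e1 : (fun i => red p k (f (d' i))) = fun i => PadicInt.toZModPow k (d' i) :=
      funext fun i => red_toZModPow k (d' i)
    have e2 : red p k (f n) = PadicInt.toZModPow k n := red_toZModPow k n
    rw [e1, e2]
    rfl
  have c4 : Nat.card {h // (∃ g, φ g = h) ∧ dg (fun i => f (d i)) h = f (p * n)} =
      Nat.card {x : Fin 4 → R // (∀ i, PadicInt.toZMod (d i) * rho p k (x i) = 0) ∧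
        dg (fun i => f (d i)) x = f (p * n)} := by
    apply Nat.card_congr
    apply Equiv.subtypeEquivRight
    intro x
    apply and_congr_left
    intro _
    constructor
    · rintro ⟨y, rfl⟩ i
      rw [hφ]
      by_cases hi : i ∈ U
      · simp [hi]
      · have : PadicInt.toZMod (d i) = 0 := (toZMod_eq_zero _).2 (by simpa using (hU i).not.1 hi)
        rw [this, zero_mul]
    · intro h
      have : ∀ i, ∃ y, (if i ∈ U then (p : R) * y else y) = x i := by
        intro i
        by_cases hi : i ∈ U
        · simp only [hi, if_true]
          rw [← rho_eq_zero]
          exact (mul_eq_zero.1 (h i)).resolve_left fun h0 => (hU i).1 hi ((toZMod_eq_zero _).1 h0)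
        · exact ⟨x i, by simp [hi]⟩
      choose y hy using this
      exact ⟨y, funext hy⟩
  change p ^ U.card * Nat.card {x : Fin 4 → R // (∀ i, PadicInt.toZMod (d i) * rho p k (x i) = 0) ∧
        dg (fun i => f (d i)) x = f (p * n)} = _
  rw [← c4, ← c1, c3, c2, cnt]

/-- normalized count -/
noncomputable def nc (d : Fin 4 → ℤ_[p]) (n : ℤ_[p]) (k : ℕ) : ℝ := (cnt d n k : ℝ) / (p : ℝ) ^ (3 * k)

noncomputable def ns (d : Fin 4 → ℤ_[p]) (n : ℤ_[p]) : ℝ :=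
  (nsc (fun i => PadicInt.toZMod (d i)) (PadicInt.toZMod n) : ℝ) / (p : ℝ) ^ 3

theorem ppos : (0 : ℝ) < p := by exact_mod_cast hp.1.pos

theorem nc_unit (hodd : p ≠ 2) (d : Fin 4 → ℤ_[p]) (n : ℤ_[p]) (hn : ¬ (p : ℤ_[p]) ∣ n) (k : ℕ) :
    nc d n (k + 1) = ns d n := by
  have := ppos (p := p)
  rw [nc, ns, cnt_unit hodd d n hn]
  push_cast
  rw [mul_add, pow_add]
  field_simp

theorem nc_ge (hodd : p ≠ 2) (d : Fin 4 → ℤ_[p]) (n : ℤ_[p]) (k : ℕ) :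
    ns d n ≤ nc d n (k + 1) := by
  have := ppos (p := p)
  rw [nc, ns, cnt_split hodd d n]
  push_cast
  rw [mul_add, pow_add, div_le_div_iff₀ (by positivity) (by positivity)]
  have h : (0 : ℝ) ≤ (sing d n k : ℝ) * p ^ 3 := by positivity
  rw [mul_one]
  linarith

theorem nc_rec (hodd : p ≠ 2) (d d' : Fin 4 → ℤ_[p]) (U : Finset (Fin 4))
    (hU : ∀ i, i ∈ U ↔ ¬ (p : ℤ_[p]) ∣ d i)
    (h1 : ∀ i ∈ U, d' i = p * d i) (h2 : ∀ i ∉ U, d i = p * d' i) (n : ℤ_[p]) (k : ℕ) :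
    nc d (p * n) (k + 1) = ns d (p * n) + (p : ℝ) / (p : ℝ) ^ U.card * nc d' n k := by
  have := ppos (p := p)
  have hs := cnt_sing d d' U hU h1 h2 n k
  rw [nc, ns, nc, cnt_split hodd d]
  have hs' : (sing d ((p : ℤ_[p]) * n) k : ℝ)
      = p ^ 4 * cnt d' n k / p ^ U.card := by
    rw [eq_div_iff (by positivity), mul_comm]
    exact_mod_cast hs
  push_cast
  rw [hs', mul_add, pow_add]
  field_simp
  ring

/-- next form -/
theorem exists_next (d : Fin 4 → ℤ_[p]) : ∃ (U : Finset (Fin 4)) (d' : Fin 4 → ℤ_[p]),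
    (∀ i, i ∈ U ↔ ¬ (p : ℤ_[p]) ∣ d i) ∧
    (∀ i ∈ U, d' i = p * d i) ∧ (∀ i ∉ U, d i = p * d' i) := by
  classical
  have : ∀ i, ∃ e, (¬ (p : ℤ_[p]) ∣ d i → e = p * d i) ∧ ((p : ℤ_[p]) ∣ d i → d i = p * e) := by
    intro i
    by_cases h : (p : ℤ_[p]) ∣ d i
    · obtain ⟨e, he⟩ := h
      exact ⟨e, fun h' => absurd (Dvd.intro _ he.symm) h', fun _ => he⟩
    · exact ⟨_, fun _ => rfl, fun h' => absurd h' h⟩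
  choose d' hd using this
  refine ⟨Finset.univ.filter fun i => ¬ (p : ℤ_[p]) ∣ d i, d', by simp, ?_, ?_⟩
  · intro i hi; exact (hd i).1 (by simpa using hi)
  · intro i hi; exact (hd i).2 (by simpa using hi)

open Filter Topology

theorem nc_exists (hodd : p ≠ 2) (a : ℕ) : ∀ (d : Fin 4 → ℤ_[p]) (n : ℤ_[p]),
    ¬ (p : ℤ_[p]) ^ a ∣ n → ∃ β, Tendsto (nc d n) atTop (𝓝 β) := by
  induction a with
  | zero => intro d n h; simp at h
  | succ a ih =>
    intro d n h
    by_cases hn : (p : ℤ_[p]) ∣ n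
    · obtain ⟨n', rfl⟩ := hn
      obtain ⟨U, d', hU, h1, h2⟩ := exists_next d
      obtain ⟨β, hβ⟩ := ih d' n' (by
        intro h'; apply h; rw [pow_succ']; exact mul_dvd_mul_left _ h')
      refine ⟨ns d (p * n') + (p : ℝ) / (p : ℝ) ^ U.card * β, ?_⟩
      rw [← tendsto_add_atTop_iff_nat 1]
      simp only [nc_rec hodd d d' U hU h1 h2 n']
      exact (hβ.const_mul _).const_add _
    · refine ⟨ns d n, ?_⟩
      rw [← tendsto_add_atTop_iff_nat 1]
      simp only [nc_unit hodd d n hn]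
      exact tendsto_const_nhds

theorem le_lim (hodd : p ≠ 2) (d : Fin 4 → ℤ_[p]) (n : ℤ_[p]) (β : ℝ)
    (hβ : Tendsto (nc d n) atTop (𝓝 β)) : ns d n ≤ β := by
  rw [← tendsto_add_atTop_iff_nat 1] at hβ
  exact ge_of_tendsto' hβ (nc_ge hodd d n)

theorem lim_rec (hodd : p ≠ 2) (d d' : Fin 4 → ℤ_[p]) (U : Finset (Fin 4))
    (hU : ∀ i, i ∈ U ↔ ¬ (p : ℤ_[p]) ∣ d i)
    (h1 : ∀ i ∈ U, d' i = p * d i) (h2 : ∀ i ∉ U, d i = p * d' i) (n : ℤ_[p]) (β β' : ℝ)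
    (hβ : Tendsto (nc d (p * n)) atTop (𝓝 β)) (hβ' : Tendsto (nc d' n) atTop (𝓝 β')) :
    β = ns d (p * n) + (p : ℝ) / (p : ℝ) ^ U.card * β' := by
  rw [← tendsto_add_atTop_iff_nat 1] at hβ
  simp only [nc_rec hodd d d' U hU h1 h2 n] at hβ
  exact tendsto_nhds_unique hβ ((hβ'.const_mul _).const_add _)

end Padic
end LD


namespace LD

section Bound
variable {p : ℕ} [hp : Fact p.Prime]
open Filter Topology

theorem isUnit_of_not_dvd (x : ℤ_[p]) (h : ¬ (p : ℤ_[p]) ∣ x) : IsUnit x := by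
  rw [PadicInt.isUnit_iff]
  rw [← PadicInt.norm_lt_one_iff_dvd] at h
  exact le_antisymm (PadicInt.norm_le_one x) (not_lt.1 h)

theorem p_ne_zero : (p : ℤ_[p]) ≠ 0 := by exact_mod_cast hp.1.ne_zero

theorem ns_bound (d : Fin 4 → ℤ_[p]) (n : ℤ_[p])
    (h : p ^ 3 ≤ nsc (fun i => PadicInt.toZMod (d i)) (PadicInt.toZMod n) + p ^ 2) :
    1 - 1 / (p : ℝ) ≤ ns d n := by
  have h0 := ppos (p := p)
  have h' : (p : ℝ) ^ 3 ≤ nsc (fun i => PadicInt.toZMod (d i)) (PadicInt.toZMod n) + p ^ 2 := by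
    exact_mod_cast h
  rw [ns, le_div_iff₀ (by positivity)]
  have : (1 - 1 / (p : ℝ)) * p ^ 3 = p ^ 3 - p ^ 2 := by field_simp
  linarith

theorem ns_iso (hodd : p ≠ 2) (d : Fin 4 → ℤ_[p]) (n : ℤ_[p])
    (h : Iso (fun i => PadicInt.toZMod (d i))) : 1 - 1 / (p : ℝ) ≤ ns d n := by
  apply ns_bound
  have := nsc_iso (two_ne hodd) _ h (PadicInt.toZMod n)
  rwa [Nat.card_zmod] at this

theorem iso3 (hodd : p ≠ 2) (d : Fin 4 → ℤ_[p]) (i j k : Fin 4) (hij : i ≠ j)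
    (hik : i ≠ k) (hjk : j ≠ k) (hi : ¬ (p : ℤ_[p]) ∣ d i) (hj : ¬ (p : ℤ_[p]) ∣ d j)
    (hk : ¬ (p : ℤ_[p]) ∣ d k) : Iso (fun i => PadicInt.toZMod (d i)) := by
  refine iso_of_three ?_ _ i j k hij hik hjk ?_ ?_ ?_
  · rw [Nat.card_zmod]
    exact Nat.odd_iff.1 (hp.1.odd_of_ne_two hodd)
  all_goals rw [Ne, toZMod_eq_zero]; assumption

/-- descent of vectors -/
theorem descend (d d' : Fin 4 → ℤ_[p]) (U : Finset (Fin 4))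
    (hU : ∀ i, i ∈ U ↔ ¬ (p : ℤ_[p]) ∣ d i)
    (h1 : ∀ i ∈ U, d' i = p * d i) (h2 : ∀ i ∉ U, d i = p * d' i)
    (hI : ¬ Iso (fun i => PadicInt.toZMod (d i))) (x : Fin 4 → ℤ_[p])
    (hx : (p : ℤ_[p]) ∣ dg d x) :
    ∃ x' : Fin 4 → ℤ_[p], (∀ i ∈ U, x i = p * x' i) ∧ (∀ i ∉ U, x' i = x i) ∧
      (p : ℤ_[p]) * dg d' x' = dg d x := by
  classical
  have hz : ∀ i ∈ U, (p : ℤ_[p]) ∣ x i := by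
    intro i hi
    by_contra hcon
    apply hI
    refine ⟨fun i => PadicInt.toZMod (x i), ?_, i, ?_⟩
    · rw [← map_dg]; exact (toZMod_eq_zero _).2 hx
    · apply mul_ne_zero
      · rw [Ne, toZMod_eq_zero]; exact (hU i).1 hi
      · rw [Ne, toZMod_eq_zero]; exact hcon
  have : ∀ i, ∃ y, (i ∈ U → x i = p * y) ∧ (i ∉ U → y = x i) := by
    intro i
    by_cases hi : i ∈ U
    · obtain ⟨y, hy⟩ := hz i hi
      exact ⟨y, fun _ => hy, fun h => absurd hi h⟩
    · exact ⟨x i, fun h => absurd h hi, fun _ => rfl⟩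
  choose x' hx' using this
  refine ⟨x', fun i => (hx' i).1, fun i => (hx' i).2, ?_⟩
  unfold dg
  rw [Finset.mul_sum]
  apply Finset.sum_congr rfl
  intro i _
  by_cases hi : i ∈ U
  · rw [h1 i hi, (hx' i).1 hi]; ring
  · rw [h2 i hi, (hx' i).2 hi]; ring

theorem primitive_vec (d : Fin 4 → ℤ_[p]) (h : ∃ x, x ≠ 0 ∧ dg d x = 0) :
    ∃ x, (∃ i, x i = 1) ∧ dg d x = 0 := by
  obtain ⟨x, hx, hq⟩ := h
  obtain ⟨i, -, hi⟩ := Finset.exists_max_image Finset.univ (fun i => ‖x i‖) ⟨0, Finset.mem_univ _⟩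
  have hi0 : x i ≠ 0 := by
    intro h0
    apply hx
    funext j
    have := hi j (Finset.mem_univ _)
    rw [h0, norm_zero] at this
    exact norm_le_zero_iff.1 this
  have hd : ∀ j, ∃ y, x j = x i * y := by
    intro j
    have hij := hi j (Finset.mem_univ _)
    rcases ValuationRing.dvd_total (x i) (x j) with h | ⟨y, hy⟩
    · exact h
    · rw [hy, norm_mul] at hij
      by_cases hxj : x j = 0
      · exact ⟨0, by simp [hxj]⟩
      have : 1 ≤ ‖y‖ := by
        have h3 : 0 < ‖x j‖ := norm_pos_iff.2 hxj
        nlinarith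
      have hu : IsUnit y := PadicInt.isUnit_iff.2 (le_antisymm (PadicInt.norm_le_one y) this)
      obtain ⟨u, rfl⟩ := hu
      exact ⟨(u⁻¹ : ℤ_[p]ˣ), by rw [hy]; simp⟩
  choose y hy using hd
  refine ⟨y, ⟨i, ?_⟩, ?_⟩
  · have := hy i
    exact (mul_left_cancel₀ hi0 (by rw [mul_one]; exact this)).symm
  · have : dg d x = x i ^ 2 * dg d y := by
      unfold dg
      rw [Finset.mul_sum]
      apply Finset.sum_congr rfl
      intro j _
      conv_lhs => rw [hy j]
      ring
    rw [hq] at this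
    exact (mul_eq_zero.1 this.symm).resolve_left (pow_ne_zero _ hi0)

theorem pair_of_card (U : Finset (Fin 4)) (hne : U.Nonempty) (h : U.card ≤ 2) :
    ∃ i j, i ≠ j ∧ i ∈ U ∧ ∀ k, k ≠ i → k ≠ j → k ∉ U := by
  revert U; decide

theorem bound (hodd : p ≠ 2) (a : ℕ) : ∀ (d : Fin 4 → ℤ_[p]) (n : ℤ_[p]) (M : ℕ) (β : ℝ),
    ¬ (p : ℤ_[p]) ^ a ∣ n → (∀ i, d i ∣ (p : ℤ_[p]) ^ M) → (∃ x, dg d x = n) →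
    (∃ x, x ≠ 0 ∧ dg d x = 0) → Tendsto (nc d n) atTop (𝓝 β) →
    (1 - 1 / (p : ℝ)) / (p : ℝ) ^ M ≤ β := by
  classical
  have hp0 := ppos (p := p)
  have hp1 : (1 : ℝ) ≤ p := by exact_mod_cast hp.1.one_le
  have hp2 : (0 : ℝ) ≤ 1 - 1 / (p : ℝ) := by
    rw [sub_nonneg, div_le_one hp0]; exact hp1
  induction a with
  | zero => intro d n M β h; simp at h
  | succ a ih =>
    intro d n M β ha hd hrep hiso hβ
    have key : 1 - 1 / (p : ℝ) ≤ ns d n → (1 - 1 / (p : ℝ)) / (p : ℝ) ^ M ≤ β := by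
      intro h
      calc (1 - 1 / (p : ℝ)) / (p : ℝ) ^ M ≤ 1 - 1 / (p : ℝ) :=
            div_le_self hp2 (one_le_pow₀ hp1)
        _ ≤ _ := h
        _ ≤ β := le_lim hodd d n β hβ
    by_cases hI : Iso (fun i => PadicInt.toZMod (d i))
    · exact key (ns_iso hodd d n hI)
    obtain ⟨U, d', hU, h1, h2⟩ := exists_next d
    have hUc : U.card ≤ 2 := by
      by_contra hcon
      obtain ⟨i, hi, j, hj, k, hk, hij, hik, hjk⟩ := Finset.two_lt_card.1 (not_le.1 hcon)
      exact hI (iso3 hodd d i j k hij hik hjk ((hU i).1 hi) ((hU j).1 hj) ((hU k).1 hk))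
    obtain ⟨x, hx⟩ := hrep
    by_cases hn : (p : ℤ_[p]) ∣ n
    · obtain ⟨n', rfl⟩ := hn
      have ha' : ¬ (p : ℤ_[p]) ^ a ∣ n' := by
        intro h'; apply ha; rw [pow_succ']; exact mul_dvd_mul_left _ h'
      obtain ⟨β', hβ'⟩ := nc_exists hodd a d' n' ha'
      have hrec := lim_rec hodd d d' U hU h1 h2 n' β β' hβ hβ'
      have hns : 0 ≤ ns d (p * n') := by unfold ns; positivity
      have hstep : ∀ c : ℝ, 0 ≤ c → c ≤ β' → c / p ≤ β := by
        intro c hc hcb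
        have e1 : (p : ℝ) / p ^ 2 ≤ (p : ℝ) / (p : ℝ) ^ U.card := by
          gcongr
        have e2 : (p : ℝ) / p ^ 2 * c ≤ (p : ℝ) / (p : ℝ) ^ U.card * β' := by
          apply mul_le_mul e1 hcb hc (by positivity)
        have e3 : (p : ℝ) / p ^ 2 * c = c / p := by field_simp
        linarith
      match M, hd with
      | 0, hd =>
        exfalso
        have hnd : ∀ i, ¬ (p : ℤ_[p]) ∣ d i := by
          intro i h
          have h5 := h.trans (hd i)
          rw [pow_zero] at h5
          exact PadicInt.prime_p.not_isUnit (isUnit_of_dvd_one h5)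
        exact hI (iso3 hodd d 0 1 2 (by decide) (by decide) (by decide) (hnd _) (hnd _) (hnd _))
      | 1, hd =>
        rw [pow_one]
        apply hstep _ hp2
        refine le_trans (ns_iso hodd d' n' ?_) (le_lim hodd d' n' β' hβ')
        obtain ⟨z, ⟨i, hi⟩, hz⟩ := primitive_vec d hiso
        obtain ⟨z', hz1, hz2, hz3⟩ := descend d d' U hU h1 h2 hI z (by rw [hz]; exact dvd_zero _)
        rw [hz] at hz3
        have hz4 := (mul_eq_zero.1 hz3).resolve_left p_ne_zero
        have hiU : i ∉ U := by
          intro hiU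
          have := hz1 i hiU
          rw [hi] at this
          exact PadicInt.prime_p.not_isUnit (isUnit_of_dvd_one (Dvd.intro _ this.symm))
        refine ⟨fun i => PadicInt.toZMod (z' i), ?_, i, ?_⟩
        · rw [← map_dg, hz4, map_zero]
        · beta_reduce
          rw [hz2 i hiU, hi, map_one, mul_one, Ne, toZMod_eq_zero]
          rintro ⟨e, he⟩
          have := hd i
          rw [h2 i hiU, pow_one, he] at this
          obtain ⟨c, hc⟩ := this
          have h6 : (p : ℤ_[p]) * 1 = p * (p * (e * c)) := by rw [mul_one]; linear_combination hc
          have h7 := mul_left_cancel₀ p_ne_zero h6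
          exact PadicInt.prime_p.not_isUnit (isUnit_of_dvd_one (Dvd.intro _ h7.symm))
      | M + 2, hd =>
        have e : (1 - 1 / (p : ℝ)) / (p : ℝ) ^ (M + 2) =
            (1 - 1 / (p : ℝ)) / (p : ℝ) ^ (M + 1) / p := by
          rw [div_div, ← pow_succ]
        rw [e]
        apply hstep _ (by positivity)
        refine ih d' n' (M + 1) β' ha' ?_ ?_ ?_ hβ'
        · intro i
          by_cases hi : i ∈ U
          · rw [h1 i hi, pow_succ']
            exact mul_dvd_mul_left _ (isUnit_of_not_dvd _ ((hU i).1 hi)).dvd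
          · have := hd i
            rw [h2 i hi, pow_succ'] at this
            exact (mul_dvd_mul_iff_left p_ne_zero).1 this
        · obtain ⟨x', -, -, hx'⟩ := descend d d' U hU h1 h2 hI x (by rw [hx]; exact dvd_mul_right _ _)
          rw [hx] at hx'
          exact ⟨x', mul_left_cancel₀ p_ne_zero hx'⟩
        · obtain ⟨z, hz, hq⟩ := hiso
          refine ⟨fun i => if i ∈ U then z i else p * z i, ?_, ?_⟩
          · intro h0
            apply hz
            funext i
            have h8 := congrFun h0 i
            by_cases hi : i ∈ U
            · simpa [hi] using h8
            · simp only [hi, if_false, Pi.zero_apply] at h8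
              exact (mul_eq_zero.1 h8).resolve_left p_ne_zero
          · have : dg d' (fun i => if i ∈ U then z i else p * z i) = p * dg d z := by
              unfold dg
              rw [Finset.mul_sum]
              apply Finset.sum_congr rfl
              intro i _
              by_cases hi : i ∈ U
              · simp only [hi, if_true]; rw [h1 i hi]; ring
              · simp only [hi, if_false]; rw [h2 i hi]; ring
            rw [this, hq, mul_zero]
    · apply key
      apply ns_bound
      have hUne : U.Nonempty := by
        rw [Finset.nonempty_iff_ne_empty]
        rintro rfl
        apply hn
        rw [← hx]
        apply Finset.dvd_sum
        intro i _
        rw [h2 i (by simp), mul_assoc]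
        exact dvd_mul_right _ _
      obtain ⟨i, j, hij, hi, hk⟩ := pair_of_card U hUne hUc
      have := nsc_aniso (two_ne hodd) _ hI (PadicInt.toZMod n)
        (by rw [Ne, toZMod_eq_zero]; exact hn) i j hij
        (by rw [Ne, toZMod_eq_zero]; exact (hU i).1 hi)
        (fun k hki hkj => (toZMod_eq_zero _).2 (by simpa using (hU k).not.1 (hk k hki hkj)))
        (fun i => PadicInt.toZMod (x i)) (by rw [← map_dg, hx])
      rw [Nat.card_zmod] at this
      omega

end Bound
end LD

namespace LD
section Diag
variable {p : ℕ} [hp : Fact p.Prime]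

theorem isUnit_two (hodd : p ≠ 2) : IsUnit (2 : ℤ_[p]) := by
  apply isUnit_of_not_dvd
  rw [← toZMod_eq_zero]
  have := two_ne hodd
  rwa [map_ofNat]

theorem dvd_of_val (x y : ℤ_[p]) (hx : x ≠ 0) (h : y ≠ 0 → x.valuation ≤ y.valuation) : x ∣ y := by
  by_cases hy : y = 0
  · rw [hy]; exact dvd_zero _
  have h1 : (p : ℤ_[p]) ^ x.valuation ∣ y :=
    Ideal.mem_span_singleton.1 ((PadicInt.mem_span_pow_iff_le_valuation y hy _).2 (h hy))
  have h2 := PadicInt.unitCoeff_spec hx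
  obtain ⟨c, hc⟩ := h1
  refine ⟨((PadicInt.unitCoeff hx)⁻¹ : ℤ_[p]ˣ) * c, ?_⟩
  calc y = p ^ x.valuation * c := hc
    _ = (PadicInt.unitCoeff hx : ℤ_[p]) * p ^ x.valuation *
        (((PadicInt.unitCoeff hx)⁻¹ : ℤ_[p]ˣ) * c) := by
        have := (PadicInt.unitCoeff hx).mul_inv
        linear_combination (-(p : ℤ_[p]) ^ x.valuation * c) * this
    _ = _ := by rw [← h2]

theorem exists_orth (hodd : p ≠ 2) (n : ℕ) : ∀ (M : Type) [AddCommGroup M] [Module ℤ_[p] M]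
    [Module.Free ℤ_[p] M] [Module.Finite ℤ_[p] M], Module.finrank ℤ_[p] M = n →
    ∀ B : LinearMap.BilinForm ℤ_[p] M, (∀ x y, B x y = B y x) →
    ∃ b : Module.Basis (Fin n) ℤ_[p] M, ∀ i j, i ≠ j → B (b i) (b j) = 0 := by
  classical
  induction n with
  | zero =>
    intro M _ _ _ _ hM B _
    exact ⟨Module.finBasisOfFinrankEq _ _ hM, fun i => i.elim0⟩
  | succ n ih =>
    intro M _ _ _ _ hM B hB
    have hu := isUnit_two (p := p) hodd
    have h20 : (2 : ℤ_[p]) ≠ 0 := hu.ne_zero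
    have hpol : ∀ x y, 2 * B x y = B (x + y) (x + y) - B x x - B y y := by
      intro x y
      simp only [map_add, LinearMap.add_apply]
      rw [hB y x]; ring
    by_cases h0 : ∀ x, B x x = 0
    · refine ⟨Module.finBasisOfFinrankEq _ _ hM, fun i j _ => ?_⟩
      have := hpol (Module.finBasisOfFinrankEq _ _ hM i) (Module.finBasisOfFinrankEq _ _ hM j)
      rw [h0, h0, h0, sub_zero, sub_zero] at this
      exact (mul_eq_zero.1 this).resolve_left h20
    push Not at h0
    obtain ⟨v, hv0, hvmin⟩ : ∃ v, B v v ≠ 0 ∧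
        ∀ x, B x x ≠ 0 → (B v v).valuation ≤ (B x x).valuation := by
      have hex : ∃ m, ∃ v, B v v ≠ 0 ∧ (B v v).valuation = m := by
        obtain ⟨v, hv⟩ := h0
        exact ⟨_, v, hv, rfl⟩
      obtain ⟨v, hv, hm⟩ := Nat.find_spec hex
      refine ⟨v, hv, fun x hx => ?_⟩
      rw [hm]
      exact Nat.find_min' hex ⟨x, hx, rfl⟩
    have hdvd : ∀ x, B v v ∣ B x x := fun x => dvd_of_val _ _ hv0 (hvmin x)
    have hdvd2 : ∀ x, B v v ∣ B v x := by
      intro x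
      have : B v v ∣ 2 * B v x := by
        rw [hpol]
        exact dvd_sub (dvd_sub (hdvd _) (hdvd _)) (hdvd _)
      exact (hu.dvd_mul_left).1 this
    let N : Submodule ℤ_[p] M := LinearMap.ker (B v)
    have hli : ∀ (c : ℤ_[p]), ∀ x ∈ N, c • v + x = 0 → c = 0 := by
      intro c x hx hc
      have hx' : B v x = 0 := hx
      have h1 := congrArg (B v) hc
      rw [map_add, map_smul, hx', add_zero, map_zero, smul_eq_mul] at h1
      exact (mul_eq_zero.1 h1).resolve_right hv0
    have hsp : ∀ z : M, ∃ c : ℤ_[p], z + c • v ∈ N := by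
      intro z
      obtain ⟨c, hc⟩ := hdvd2 z
      refine ⟨-c, ?_⟩
      change B v (z + (-c) • v) = 0
      rw [map_add, map_smul, hc, smul_eq_mul]; ring
    have hfr : Module.finrank ℤ_[p] N = n := by
      have b0 := Module.Basis.mkFinCons v (Module.finBasis ℤ_[p] N) hli hsp
      have := Module.finrank_eq_card_basis b0
      rw [hM, Fintype.card_fin] at this
      omega
    obtain ⟨b, hb⟩ := ih N hfr (B.restrict N) (fun x y => hB x y)
    refine ⟨Module.Basis.mkFinCons v b hli hsp, ?_⟩
    rw [Module.Basis.coe_mkFinCons]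
    have hvN : ∀ x : N, B v x = 0 := fun x => x.2
    intro i j
    refine Fin.cases ?_ (fun i => ?_) i <;> refine Fin.cases ?_ (fun j => ?_) j
    · intro h; exact absurd rfl h
    · intro _
      simpa using hvN (b j)
    · intro _
      rw [hB]
      simpa using hvN (b i)
    · intro hij
      have := hb i j (fun h => hij (by rw [h]))
      simpa using this

open Matrix in
theorem exists_diag (hodd : p ≠ 2) (A : Matrix (Fin 4) (Fin 4) ℤ_[p]) (hA : A.IsSymm) :
    ∃ (P P' : Matrix (Fin 4) (Fin 4) ℤ_[p]) (d : Fin 4 → ℤ_[p]), P * P' = 1 ∧ P' * P = 1 ∧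
      Pᵀ * A * P = Matrix.diagonal d := by
  classical
  obtain ⟨b, hb⟩ := exists_orth hodd 4 (Fin 4 → ℤ_[p]) (by simp) (Matrix.toBilin' A) (by
    intro x y
    rw [Matrix.toBilin'_apply', Matrix.toBilin'_apply', dotProduct_mulVec, dotProduct_comm,
      ← mulVec_transpose, hA.eq])
  refine ⟨(Pi.basisFun ℤ_[p] (Fin 4)).toMatrix b, b.toMatrix (Pi.basisFun ℤ_[p] (Fin 4)),
    fun i => Matrix.toBilin' A (b i) (b i), Module.Basis.toMatrix_mul_toMatrix_flip _ _,
    Module.Basis.toMatrix_mul_toMatrix_flip _ _, ?_⟩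
  have key : ∀ i j, (((Pi.basisFun ℤ_[p] (Fin 4)).toMatrix b)ᵀ * A *
      (Pi.basisFun ℤ_[p] (Fin 4)).toMatrix b) i j = Matrix.toBilin' A (b i) (b j) := by
    intro i j
    rw [Matrix.toBilin'_apply', dotProduct_mulVec, Matrix.mul_apply_eq_vecMul]
    simp only [Matrix.vecMul, dotProduct, Matrix.mul_apply, Matrix.transpose_apply,
      Module.Basis.toMatrix_apply, Pi.basisFun_repr]
  ext i j
  rw [key, Matrix.diagonal_apply]
  split_ifs with h
  · rw [h]
  · exact hb i j h

theorem dg_diag {R : Type*} [CommRing R] (d x : Fin 4 → R) :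
    x ⬝ᵥ (Matrix.diagonal d).mulVec x = dg d x := by
  simp only [dg, dotProduct, Matrix.mulVec_diagonal]
  exact Finset.sum_congr rfl fun i _ => by ring

theorem two_Qval {R : Type*} [CommRing R] (A : Matrix (Fin 4) (Fin 4) ℤ) (hA : IsGram A)
    (x : Fin 4 → R) :
    2 * Qval A x = x ⬝ᵥ (A.map (Int.cast : ℤ → R)).mulVec x := by
  obtain ⟨hs, he⟩ := hA
  have hd : ∀ i, ((A i i : ℤ) : R) = 2 * ((A i i / 2 : ℤ) : R) := by
    intro i
    have := Int.mul_ediv_cancel' (he i)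
    conv_lhs => rw [← this]
    push_cast
    ring
  have hsy : ∀ i j, A j i = A i j := fun i j => hs.apply i j
  have i0 : Finset.Ioi (0 : Fin 4) = {1, 2, 3} := by decide
  have i1 : Finset.Ioi (1 : Fin 4) = {2, 3} := by decide
  have i2 : Finset.Ioi (2 : Fin 4) = {3} := by decide
  have i3 : Finset.Ioi (3 : Fin 4) = ∅ := by decide
  simp only [Qval, dotProduct, Matrix.mulVec, Matrix.map_apply, Fin.sum_univ_four, i0, i1, i2, i3,
    Finset.sum_empty, Finset.sum_singleton]
  rw [Finset.sum_insert (by decide), Finset.sum_insert (by decide), Finset.sum_insert (by decide)]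
  simp only [Finset.sum_singleton]
  rw [hd 0, hd 1, hd 2, hd 3, hsy 0 1, hsy 0 2, hsy 0 3, hsy 1 2, hsy 1 3, hsy 2 3]
  ring

theorem map_Qval {R S : Type*} [CommRing R] [CommRing S] (f : R →+* S)
    (A : Matrix (Fin 4) (Fin 4) ℤ) (x : Fin 4 → R) :
    f (Qval A x) = Qval A (fun i => f (x i)) := by
  simp [Qval]

open Matrix in
/-- transport along the diagonalization -/
theorem two_Qval_mul {S : Type*} [CommRing S] (f : ℤ_[p] →+* S)
    (A : Matrix (Fin 4) (Fin 4) ℤ) (hA : IsGram A) (P : Matrix (Fin 4) (Fin 4) ℤ_[p])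
    (d : Fin 4 → ℤ_[p])
    (h : Pᵀ * A.map (Int.cast : ℤ → ℤ_[p]) * P = Matrix.diagonal d) (y : Fin 4 → S) :
    2 * Qval A ((P.map f).mulVec y) = dg (fun i => f (d i)) y := by
  rw [two_Qval A hA, ← dg_diag]
  have h' := congrArg (fun X => X.map f) h
  simp only [Matrix.map_mul, Matrix.transpose_map, Matrix.diagonal_map (map_zero f),
    Matrix.map_map] at h'
  have e : (f ∘ (Int.cast : ℤ → ℤ_[p])) = (Int.cast : ℤ → S) := by
    funext z; simp
  rw [e] at h'
  change _ = y ⬝ᵥ (diagonal (f ∘ d)).mulVec y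
  change _ = diagonal (f ∘ d) at h'
  rw [← h', ← Matrix.mulVec_mulVec, ← Matrix.mulVec_mulVec, dotProduct_mulVec y,
    Matrix.vecMul_transpose]

end Diag
end LD

open LD Matrix in
/-- Isotropic case bound (odd primes): if `Q` is isotropic over `ℚ_p` and `n` is
represented over `ℤ_p` then `β_p(Q;n) ≥ (1 - 1/p) · p^(-ord_p(N(Q)))`. -/
theorem local_density_isotropic_odd
    (A : Matrix (Fin 4) (Fin 4) ℤ) (N p n : ℕ) [Fact p.Prime]
    (hA : IsGram A) (hprim : IsPrimitiveQF A) (hpd : PosDefQF A)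
    (hN : IsLevel A N) (hodd : p ≠ 2) (hn : 0 < n)
    (hiso : ∃ x : Fin 4 → ℚ_[p], x ≠ 0 ∧ Qval A x = 0)
    (h : ∃ x : Fin 4 → ℤ_[p], Qval A x = (n : ℤ_[p])) :
    DensityBound A p n
      ((1 - 1 / (p : ℝ)) * (p : ℝ) ^ (-(N.factorization p : ℝ))) := by
  classical
  have hp : Fact p.Prime := inferInstance
  have hu := isUnit_two (p := p) hodd
  set AZ := A.map (Int.cast : ℤ → ℤ_[p]) with hAZ
  have hsymm : AZ.IsSymm := by
    rw [hAZ, Matrix.IsSymm, ← Matrix.transpose_map, hA.1.eq]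
  obtain ⟨P, P', d, hPP', hP'P, hdiag⟩ := exists_diag hodd AZ hsymm
  have hQ : ∀ x : Fin 4 → ℤ_[p], dg d (P'.mulVec x) = 2 * Qval A x := by
    intro x
    have := two_Qval_mul (RingHom.id ℤ_[p]) A hA P d hdiag (P'.mulVec x)
    simp only [RingHom.id_apply, RingHom.coe_id, Matrix.map_id] at this
    rw [← this, Matrix.mulVec_mulVec, hPP', Matrix.one_mulVec]
  have hinj : ∀ x : Fin 4 → ℤ_[p], P'.mulVec x = 0 → x = 0 := by
    intro x hx
    have := congrArg P.mulVec hx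
    rwa [Matrix.mulVec_mulVec, hPP', Matrix.one_mulVec, Matrix.mulVec_zero] at this
  -- the local count
  have hcnt : ∀ k, localCount A p n k = cnt d (2 * n : ℤ_[p]) k := by
    intro k
    let f : ℤ_[p] →+* ZMod (p ^ k) := PadicInt.toZModPow k
    have hf1 : P.map f * P'.map f = 1 := by
      rw [← Matrix.map_mul, hPP', Matrix.map_one f (map_zero f) (map_one f)]
    have hf2 : P'.map f * P.map f = 1 := by
      rw [← Matrix.map_mul, hP'P, Matrix.map_one f (map_zero f) (map_one f)]
    unfold localCount cnt
    symm
    let e : (Fin 4 → ZMod (p ^ k)) ≃ (Fin 4 → ZMod (p ^ k)) :=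
      { toFun := (P.map f).mulVec
        invFun := (P'.map f).mulVec
        left_inv := fun x => by rw [Matrix.mulVec_mulVec, hf2, Matrix.one_mulVec]
        right_inv := fun x => by rw [Matrix.mulVec_mulVec, hf1, Matrix.one_mulVec] }
    apply Nat.card_congr
    refine Equiv.subtypeEquiv e ?_
    intro y
    have h2u : IsUnit (2 : ZMod (p ^ k)) := by
      have := hu.map f
      rwa [map_ofNat] at this
    have h3 := two_Qval_mul f A hA P d hdiag y
    change dg (fun i => f (d i)) y = f (2 * n) ↔ Qval A ((P.map f).mulVec y) = _
    rw [← h3, map_mul, map_ofNat, map_natCast, h2u.mul_right_inj]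
  -- nonvanishing
  have hn0 : (2 * n : ℤ_[p]) ≠ 0 :=
    mul_ne_zero hu.ne_zero (by exact_mod_cast hn.ne')
  obtain ⟨a, ha⟩ : ∃ a : ℕ, ¬ (p : ℤ_[p]) ^ a ∣ (2 * n : ℤ_[p]) := by
    have := FiniteMultiplicity.of_prime_left (PadicInt.prime_p (p := p)) hn0
    obtain ⟨a, ha⟩ := this
    exact ⟨a + 1, ha⟩
  obtain ⟨β, hβ⟩ := nc_exists hodd a d (2 * n : ℤ_[p]) ha
  refine ⟨β, ?_, ?_⟩
  · simp only [hcnt]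
    exact hβ
  have hM : ∀ i, d i ∣ (p : ℤ_[p]) ^ (N.factorization p) := by
    obtain ⟨hN0, ⟨Bm, hB, -⟩, -⟩ := hN
    have hdetR : (A.map (Int.cast : ℤ → ℝ)).det ≠ 0 := hpd.det_pos.ne'
    have hdetZ : A.det ≠ 0 := by
      intro h0
      apply hdetR
      have := (Int.castRingHom ℝ).map_det A
      rw [h0, map_zero] at this
      exact this.symm
    have hdetQ : (A.map (Int.cast : ℤ → ℚ)).det ≠ 0 := by
      intro h0
      apply hdetZ
      have := (Int.castRingHom ℚ).map_det A
      have h9 : ((A.det : ℤ) : ℚ) = 0 := this.trans h0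
      exact_mod_cast h9
    have hAB : A * Bm = (N : ℤ) • (1 : Matrix (Fin 4) (Fin 4) ℤ) := by
      have h4 : (A * Bm).map (Int.cast : ℤ → ℚ) =
          ((N : ℤ) • (1 : Matrix (Fin 4) (Fin 4) ℤ)).map (Int.cast : ℤ → ℚ) := by
        have h5 : (A * Bm).map (Int.cast : ℤ → ℚ) =
          A.map (Int.cast : ℤ → ℚ) * Bm.map (Int.cast : ℤ → ℚ) :=
          Matrix.map_mul (f := Int.castRingHom ℚ)
        rw [h5, hB, Matrix.mul_smul, Matrix.mul_nonsing_inv _ (isUnit_iff_ne_zero.2 hdetQ)]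
        ext i j
        simp only [Matrix.map_apply, Matrix.smul_apply, Matrix.one_apply]
        split_ifs <;> simp
      ext i j
      have := congrFun (congrFun h4 i) j
      simp only [Matrix.map_apply] at this
      exact_mod_cast this
    have hABp : AZ * Bm.map (Int.cast : ℤ → ℤ_[p]) =
        (N : ℤ_[p]) • (1 : Matrix (Fin 4) (Fin 4) ℤ_[p]) := by
      have h5 : (A * Bm).map (Int.cast : ℤ → ℤ_[p]) =
          AZ * Bm.map (Int.cast : ℤ → ℤ_[p]) :=
          Matrix.map_mul (f := Int.castRingHom ℤ_[p])
      rw [← h5, hAB]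
      ext i j
      simp only [Matrix.map_apply, Matrix.smul_apply, Matrix.one_apply]
      split_ifs <;> simp
    have hfin : Matrix.diagonal d * (P' * Bm.map (Int.cast : ℤ → ℤ_[p]) * P'ᵀ) =
        (N : ℤ_[p]) • (1 : Matrix (Fin 4) (Fin 4) ℤ_[p]) := by
      calc Matrix.diagonal d * (P' * Bm.map (Int.cast : ℤ → ℤ_[p]) * P'ᵀ)
          = Pᵀ * AZ * (P * P') * Bm.map (Int.cast : ℤ → ℤ_[p]) * P'ᵀ := by
            rw [← hdiag]; simp only [Matrix.mul_assoc]
        _ = Pᵀ * (AZ * Bm.map (Int.cast : ℤ → ℤ_[p])) * P'ᵀ := by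
            rw [hPP', Matrix.mul_one]; simp only [Matrix.mul_assoc]
        _ = (N : ℤ_[p]) • (P' * P)ᵀ := by
            rw [hABp, Matrix.transpose_mul]; simp
        _ = _ := by rw [hP'P, Matrix.transpose_one]
    intro i
    have h6 := congrFun (congrFun hfin i) i
    rw [Matrix.diagonal_mul] at h6
    have h7 : d i ∣ (N : ℤ_[p]) := by
      refine Dvd.intro _ (h6.trans ?_)
      simp
    have h8 := Nat.ordProj_mul_ordCompl_eq_self N p
    have h9 : IsUnit (((N / p ^ N.factorization p : ℕ)) : ℤ_[p]) := by
      apply isUnit_of_not_dvd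
      rw [← toZMod_eq_zero, map_natCast, ZMod.natCast_eq_zero_iff]
      exact Nat.not_dvd_ordCompl hp.1 hN0.ne'
    rw [← h8, Nat.cast_mul, h9.dvd_mul_right, Nat.cast_pow] at h7
    exact h7
  have hres := bound hodd a d (2 * n : ℤ_[p]) (N.factorization p) β ha hM ?_ ?_ hβ
  · rw [Real.rpow_neg (by positivity), Real.rpow_natCast, ← div_eq_mul_inv]
    exact hres
  · obtain ⟨x, hx⟩ := h
    exact ⟨P'.mulVec x, by rw [hQ, hx]⟩
  · obtain ⟨x, hx0, hx⟩ := hiso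
    obtain ⟨⟨c, hc⟩, hc'⟩ := IsLocalization.exist_integer_multiples_of_finite
      (nonZeroDivisors ℤ_[p]) x
    choose z hz using hc'
    have hc0 : algebraMap ℤ_[p] ℚ_[p] c ≠ 0 := by
      have := nonZeroDivisors.ne_zero hc
      rwa [Ne, FaithfulSMul.algebraMap_eq_zero_iff]
    have hz' : ∀ i, algebraMap ℤ_[p] ℚ_[p] (z i) = algebraMap ℤ_[p] ℚ_[p] c * x i := by
      intro i
      rw [hz i]
      exact Algebra.smul_def c (x i)
    refine ⟨P'.mulVec z, ?_, ?_⟩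
    · intro h0
      have h1 := hinj z h0
      apply hx0
      funext i
      have := hz' i
      rw [h1, Pi.zero_apply, map_zero] at this
      exact (mul_eq_zero.1 this.symm).resolve_left hc0
    · rw [hQ]
      have h1 : algebraMap ℤ_[p] ℚ_[p] (Qval A z) = 0 := by
        rw [map_Qval]
        have : Qval A (fun i => algebraMap ℤ_[p] ℚ_[p] (z i)) =
            (algebraMap ℤ_[p] ℚ_[p] c) ^ 2 * Qval A x := by
          simp only [hz', Qval, mul_add, Finset.mul_sum]
          congr 1
          · exact Finset.sum_congr rfl fun i _ => by ring
          · exact Finset.sum_congr rfl fun i _ => Finset.sum_congr rfl fun j _ => by ring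
        rw [this, hx, mul_zero]
      rw [FaithfulSMul.algebraMap_eq_zero_iff] at h1
      rw [h1, mul_zero]
end

section
/- Let Q be a primitive positive-definite quaternary integer-valued quadratic form with level N(Q), and let n be a positive integer. Suppose Q is isotropic over ℚ_2 (i.e. there exists a nonzero x ∈ ℚ_2⁴ with Q(x) = 0) and n is represented by Q over ℤ_2. Then the local density β_2(Q;n) exists and satisfies β_2(Q;n) ≥ 2^(−2 − ord_2(N(Q))), where ord_2 denotes the 2-adic valuation. -/
open scoped BigOperators

def bil (A : Matrix (Fin 4) (Fin 4) ℤ) (x y : Fin 4 → ℤ) : ℤ := ∑ i, (A.mulVec x) i * y i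

lemma Qval_expand {R : Type*} [CommRing R] (A : Matrix (Fin 4) (Fin 4) ℤ) (x : Fin 4 → R) :
    Qval A x = ((A 0 0 / 2 : ℤ) : R) * x 0 ^ 2 + ((A 1 1 / 2 : ℤ) : R) * x 1 ^ 2
      + ((A 2 2 / 2 : ℤ) : R) * x 2 ^ 2 + ((A 3 3 / 2 : ℤ) : R) * x 3 ^ 2
      + ((A 0 1 : ℤ) : R) * (x 0 * x 1) + ((A 0 2 : ℤ) : R) * (x 0 * x 2)
      + ((A 0 3 : ℤ) : R) * (x 0 * x 3) + ((A 1 2 : ℤ) : R) * (x 1 * x 2)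
      + ((A 1 3 : ℤ) : R) * (x 1 * x 3) + ((A 2 3 : ℤ) : R) * (x 2 * x 3) := by
  have h0 : Finset.Ioi (0 : Fin 4) = {1, 2, 3} := by decide
  have h1 : Finset.Ioi (1 : Fin 4) = {2, 3} := by decide
  have h2 : Finset.Ioi (2 : Fin 4) = {3} := by decide
  have h3 : Finset.Ioi (3 : Fin 4) = ∅ := by decide
  simp [Qval, Fin.sum_univ_four, h0, h1, h2, h3]
  ring

lemma Qval_map {R S : Type*} [CommRing R] [CommRing S] (f : R →+* S)
    (A : Matrix (Fin 4) (Fin 4) ℤ) (x : Fin 4 → R) :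
    Qval A (fun i => f (x i)) = f (Qval A x) := by
  simp [Qval_expand]

lemma Qval_smul {R : Type*} [CommRing R] (A : Matrix (Fin 4) (Fin 4) ℤ) (t : R) (x : Fin 4 → R) :
    Qval A (t • x) = t ^ 2 * Qval A x := by
  simp [Qval_expand]; ring

lemma bil_expand (A : Matrix (Fin 4) (Fin 4) ℤ) (x y : Fin 4 → ℤ) :
    bil A x y = ∑ i, (∑ j, A i j * x j) * y i := by
  simp [bil, Matrix.mulVec, dotProduct]

lemma gram_exists {A : Matrix (Fin 4) (Fin 4) ℤ} (hA : IsGram A) (i : Fin 4) :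
    A i i = 2 * (A i i / 2) := by
  have := hA.2 i; omega

lemma Qval_add {A : Matrix (Fin 4) (Fin 4) ℤ} (hA : IsGram A) (x y : Fin 4 → ℤ) :
    Qval A (x + y) = Qval A x + Qval A y + bil A x y := by
  have d := gram_exists hA
  have s := fun i j => hA.1.apply i j
  simp only [Qval_expand, bil_expand, Fin.sum_univ_four, Pi.add_apply, Int.cast_id]
  rw [s 0 1, s 0 2, s 0 3, s 1 2, s 1 3, s 2 3]
  linear_combination (-x 0 * y 0) * d 0 + (- x 1 * y 1) * d 1 + (- x 2 * y 2) * d 2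
    + (- x 3 * y 3) * d 3

lemma bil_self {A : Matrix (Fin 4) (Fin 4) ℤ} (hA : IsGram A) (x : Fin 4 → ℤ) :
    bil A x x = 2 * Qval A x := by
  have h := Qval_add hA x x
  have h2 := Qval_smul A (2 : ℤ) x
  have : x + x = (2 : ℤ) • x := by rw [two_smul]
  rw [this] at h
  linarith

lemma bil_comm {A : Matrix (Fin 4) (Fin 4) ℤ} (hA : IsGram A) (x y : Fin 4 → ℤ) :
    bil A x y = bil A y x := by
  have h := Qval_add hA x y
  have h2 := Qval_add hA y x
  rw [add_comm x y] at h
  linarith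

lemma bil_add_right (A : Matrix (Fin 4) (Fin 4) ℤ) (x y z : Fin 4 → ℤ) :
    bil A x (y + z) = bil A x y + bil A x z := by
  simp [bil, mul_add, Finset.sum_add_distrib]

lemma bil_smul_right (A : Matrix (Fin 4) (Fin 4) ℤ) (x y : Fin 4 → ℤ) (t : ℤ) :
    bil A x (t • y) = t * bil A x y := by
  simp only [bil, Finset.mul_sum, Pi.smul_apply, smul_eq_mul]
  exact Finset.sum_congr rfl fun i _ => by ring

lemma bil_add_left (A : Matrix (Fin 4) (Fin 4) ℤ) (x y z : Fin 4 → ℤ) :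
    bil A (x + y) z = bil A x z + bil A y z := by
  simp [bil, Matrix.mulVec_add, add_mul, Finset.sum_add_distrib]

lemma bil_smul_left (A : Matrix (Fin 4) (Fin 4) ℤ) (x y : Fin 4 → ℤ) (t : ℤ) :
    bil A (t • x) y = t * bil A x y := by
  simp only [bil, Finset.mul_sum, Pi.smul_apply, smul_eq_mul, Matrix.mulVec_smul]
  exact Finset.sum_congr rfl fun i _ => by ring

lemma bil_dvd {A : Matrix (Fin 4) (Fin 4) ℤ} {x : Fin 4 → ℤ} {d : ℤ}
    (h : ∀ i, d ∣ (A.mulVec x) i) (y : Fin 4 → ℤ) : d ∣ bil A x y :=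
  Finset.dvd_sum fun i _ => Dvd.dvd.mul_right (h i) _

lemma bil_single (A : Matrix (Fin 4) (Fin 4) ℤ) (x : Fin 4 → ℤ) (i : Fin 4) :
    bil A x (Pi.single i 1) = (A.mulVec x) i := by
  simp [bil, Pi.single_apply]

lemma val_cases (w : Fin 4 → ℤ) (j : ℕ) :
    (∀ i, (2 : ℤ) ^ j ∣ w i) ∨
      ∃ a < j, (∀ i, (2 : ℤ) ^ a ∣ w i) ∧ ∃ i, ¬ (2 : ℤ) ^ (a + 1) ∣ w i := by
  induction j with
  | zero => left; simp
  | succ j ih =>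
    rcases ih with h | ⟨a, ha, h⟩
    · by_cases h' : ∀ i, (2 : ℤ) ^ (j + 1) ∣ w i
      · exact Or.inl h'
      · push Not at h'
        exact Or.inr ⟨j, by omega, h, h'⟩
    · exact Or.inr ⟨a, by omega, h⟩

/-- Solve `α + u t + 2 q t² = 0` modulo `2^j` with `u` odd. -/
lemma solve_mod (j : ℕ) (α u q : ℤ) (hu : Odd u) :
    ∃ t < 2 ^ j, (2 : ℤ) ^ j ∣ α + u * (t : ℕ) + 2 * q * (t : ℕ) ^ 2 := by
  let f : ZMod (2 ^ j) → ZMod (2 ^ j) := fun t => (u : ZMod (2 ^ j)) * t + 2 * q * t ^ 2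
  have hinj : Function.Injective f := by
    intro s t h
    obtain ⟨s, rfl⟩ := ZMod.intCast_surjective s
    obtain ⟨t, rfl⟩ := ZMod.intCast_surjective t
    simp only [f] at h
    have h1 : (((s - t) * (u + 2 * (q * (s + t))) : ℤ) : ZMod (2 ^ j)) = 0 := by
      push_cast; linear_combination h
    rw [ZMod.intCast_zmod_eq_zero_iff_dvd] at h1
    have hodd : Odd (u + 2 * (q * (s + t))) := hu.add_even (even_two_mul _)
    have hc : IsCoprime (((2 ^ j : ℕ) : ℤ)) (u + 2 * (q * (s + t))) := by
      push_cast
      exact IsCoprime.pow_left (Int.isCoprime_two_left.mpr hodd)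
    have h2 := hc.dvd_of_dvd_mul_right h1
    have : ((s - t : ℤ) : ZMod (2 ^ j)) = 0 := (ZMod.intCast_zmod_eq_zero_iff_dvd _ _).2 h2
    push_cast at this
    exact sub_eq_zero.1 this
  have hs := Finite.surjective_of_injective hinj (-(α : ZMod (2 ^ j)))
  obtain ⟨t, ht⟩ := hs
  refine ⟨t.val, ZMod.val_lt t, ?_⟩
  have : ((α + u * (t.val : ℕ) + 2 * q * (t.val : ℕ) ^ 2 : ℤ) : ZMod (2 ^ j)) = 0 := by
    push_cast
    simp only [ZMod.natCast_val, ZMod.cast_id', id_eq]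
    simp only [f] at ht
    linear_combination ht
  rw [ZMod.intCast_zmod_eq_zero_iff_dvd] at this
  exact_mod_cast this

lemma odd_quot {b : ℤ} {c : ℕ} (h1 : (2 : ℤ) ^ c ∣ b) (h2 : ¬ (2 : ℤ) ^ (c + 1) ∣ b) :
    ∃ u, Odd u ∧ b = 2 ^ c * u := by
  obtain ⟨u, rfl⟩ := h1
  refine ⟨u, ?_, rfl⟩
  by_contra h
  rw [Int.not_odd_iff_even] at h
  obtain ⟨k, rfl⟩ := h
  exact h2 ⟨k, by ring⟩

lemma line_lemma {A : Matrix (Fin 4) (Fin 4) ℤ} (hA : IsGram A) (n k c : ℕ) (hck : c ≤ k)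
    {ι : Type*} [Fintype ι] (X : ι → Fin 4 → ℤ)
    (hX : ∀ i j, (∀ l, (2 : ℤ) ^ k ∣ X i l - X j l) → i = j) (y : Fin 4 → ℤ)
    (hy : (2 : ℤ) ^ (c + 1) ∣ Qval A y)
    (h1 : ∀ i, (2 : ℤ) ^ c ∣ Qval A (X i) - n)
    (h2 : ∀ i, (2 : ℤ) ^ c ∣ bil A (X i) y) (h3 : ∀ i, ¬ (2 : ℤ) ^ (c + 1) ∣ bil A (X i) y) :
    Fintype.card ι ≤ 2 ^ (k - c) * localCount A 2 n k := by
  have key : ∀ i, ∃ t : Fin (2 ^ (k - c)), (2 : ℤ) ^ k ∣ Qval A (X i + (t.val : ℤ) • y) - n := by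
    intro i
    obtain ⟨u, hu, hb⟩ := odd_quot (h2 i) (h3 i)
    obtain ⟨α, hα⟩ := h1 i
    obtain ⟨q, hq⟩ := hy
    obtain ⟨t, ht, htd⟩ := solve_mod (k - c) α u q hu
    refine ⟨⟨t, ht⟩, ?_⟩
    have e : Qval A (X i + (t : ℤ) • y) - n = 2 ^ c * (α + u * (t : ℕ) + 2 * q * (t : ℕ) ^ 2) := by
      rw [Qval_add hA, Qval_smul, bil_smul_right, hb, hq]
      linear_combination hα
    have e2 : (2 : ℤ) ^ k = 2 ^ c * 2 ^ (k - c) := by rw [← pow_add]; congr 1; omega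
    simp only
    rw [e, e2]
    exact mul_dvd_mul_left _ htd
  choose t ht using key
  let F : ι → {x : Fin 4 → ZMod (2 ^ k) // Qval A x = (n : ZMod (2 ^ k))} × Fin (2 ^ (k - c)) :=
    fun i => (⟨fun l => (((X i + ((t i).val : ℤ) • y) l : ℤ) : ZMod (2 ^ k)), by
      have := Qval_map (Int.castRingHom (ZMod (2 ^ k))) A (X i + ((t i).val : ℤ) • y)
      simp only [eq_intCast] at this
      rw [this, ← sub_eq_zero]
      have h := (ZMod.intCast_zmod_eq_zero_iff_dvd (Qval A (X i + ((t i).val : ℤ) • y) - n) (2 ^ k)).2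
        (by exact_mod_cast ht i)
      simpa using h⟩, t i)
  have hF : Function.Injective F := by
    intro i j hij
    simp only [F, Prod.mk.injEq, Subtype.mk.injEq] at hij
    apply hX
    intro l
    have := congrFun hij.1 l
    rw [hij.2] at this
    simp only [Pi.add_apply, Int.cast_add, add_left_inj] at this
    rw [← sub_eq_zero, ← Int.cast_sub, ZMod.intCast_zmod_eq_zero_iff_dvd] at this
    exact_mod_cast this
  have := Nat.card_le_card_of_injective F hF
  rw [Nat.card_prod, Nat.card_eq_fintype_card, Nat.card_eq_fintype_card (α := Fin _),
    Fintype.card_fin] at this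
  rw [mul_comm]
  exact this

open MvPolynomial in
lemma two_zeros (A : Matrix (Fin 4) (Fin 4) ℤ) (l m : Fin 4 → ℤ) :
    ∃ z : Fin 4 → ℤ, (∃ i, ¬ 2 ∣ z i) ∧ 2 ∣ Qval A z + ∑ i, l i * z i ∧ 2 ∣ ∑ i, m i * z i := by
  have : Fact (Nat.Prime 2) := ⟨Nat.prime_two⟩
  have hlin : ∀ a : Fin 4 → ℤ,
      (∑ i, C (a i : ZMod 2) * X i : MvPolynomial (Fin 4) (ZMod 2)).totalDegree ≤ 1 := by
    intro a
    refine totalDegree_finsetSum_le fun i _ => (totalDegree_mul _ _).trans ?_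
    rw [totalDegree_C]; simp
  have hcoef : ∀ (a : ℤ) (p : MvPolynomial (Fin 4) (ZMod 2)), p.totalDegree ≤ 2 →
      (C (a : ZMod 2) * p).totalDegree ≤ 2 := by
    intro a p hp
    refine (totalDegree_mul _ _).trans ?_
    rw [totalDegree_C]; simpa using hp
  have hq : (Qval A (X : Fin 4 → MvPolynomial (Fin 4) (ZMod 2))).totalDegree ≤ 2 := by
    have hc : ∀ a : ℤ, (a : MvPolynomial (Fin 4) (ZMod 2)) = C (a : ZMod 2) := by simp
    unfold Qval
    refine (totalDegree_add _ _).trans (max_le ?_ ?_)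
    · refine totalDegree_finsetSum_le fun i _ => ?_
      rw [hc]
      refine hcoef _ _ ((totalDegree_pow _ _).trans ?_)
      simp
    · refine totalDegree_finsetSum_le fun i _ => totalDegree_finsetSum_le fun j _ => ?_
      rw [hc]
      refine hcoef _ _ ((totalDegree_mul _ _).trans ?_)
      simp
  set f₁ : MvPolynomial (Fin 4) (ZMod 2) := Qval A X + ∑ i, C (l i : ZMod 2) * X i with hf₁
  set f₂ : MvPolynomial (Fin 4) (ZMod 2) := ∑ i, C (m i : ZMod 2) * X i with hf₂
  have hd1 : f₁.totalDegree ≤ 2 :=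
    (totalDegree_add _ _).trans (max_le hq ((hlin l).trans (by norm_num)))
  have hd2 : f₂.totalDegree ≤ 1 := hlin m
  have hcw := char_dvd_card_solutions_of_add_lt 2 (f₁ := f₁) (f₂ := f₂)
    (by rw [Fintype.card_fin]; omega)
  have he1 : ∀ x, eval x f₁ = Qval A x + ∑ i, (l i : ZMod 2) * x i := by
    intro x
    have := Qval_map (eval x) A (X : Fin 4 → MvPolynomial (Fin 4) (ZMod 2))
    simp only [eval_X] at this
    simp only [hf₁, map_add, map_sum, map_mul, eval_C, eval_X]
    rw [← this]
  have he2 : ∀ x, eval x f₂ = ∑ i, (m i : ZMod 2) * x i := by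
    intro x
    simp only [hf₂, map_sum, map_mul, eval_C, eval_X]
  have h0 : eval (0 : Fin 4 → ZMod 2) f₁ = 0 ∧ eval (0 : Fin 4 → ZMod 2) f₂ = 0 := by
    rw [he1, he2]; simp [Qval_expand]
  have hpos : 0 < Fintype.card {x : Fin 4 → ZMod 2 // eval x f₁ = 0 ∧ eval x f₂ = 0} :=
    Fintype.card_pos_iff.2 ⟨⟨0, h0⟩⟩
  have h1 : 1 < Fintype.card {x : Fin 4 → ZMod 2 // eval x f₁ = 0 ∧ eval x f₂ = 0} := by
    have := Nat.le_of_dvd hpos hcw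
    omega
  obtain ⟨⟨x, hx⟩, hne⟩ := Fintype.exists_ne_of_one_lt_card h1 ⟨0, h0⟩
  choose z hz using fun i => ZMod.intCast_surjective (x i)
  have hz' : x = fun i => ((z i : ℤ) : ZMod 2) := by funext i; exact (hz i).symm
  refine ⟨z, ?_, ?_, ?_⟩
  · by_contra hcon
    push Not at hcon
    apply hne
    simp only [Subtype.mk.injEq]
    funext i
    rw [← hz i]
    exact (ZMod.intCast_zmod_eq_zero_iff_dvd _ 2).2 (hcon i)
  · have h := hx.1
    rw [he1, hz'] at h
    have hm := Qval_map (Int.castRingHom (ZMod 2)) A z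
    simp only [eq_intCast] at hm
    rw [hm] at h
    apply (ZMod.intCast_zmod_eq_zero_iff_dvd _ 2).1
    push_cast
    exact h
  · have h := hx.2
    rw [he2, hz'] at h
    apply (ZMod.intCast_zmod_eq_zero_iff_dvd _ 2).1
    push_cast
    exact h

lemma fin_inj {k j : ℕ} (hj : j ≤ k) (v w : Fin 4 → Fin (2 ^ (k - j)))
    (h : ∀ l, (2 : ℤ) ^ k ∣ 2 ^ j * ((v l).val : ℤ) - 2 ^ j * ((w l).val : ℤ)) : v = w := by
  funext l
  have h1 := h l
  have e2 : (2 : ℤ) ^ k = 2 ^ j * 2 ^ (k - j) := by rw [← pow_add]; congr 1; omega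
  rw [← mul_sub, e2] at h1
  have h2 := (mul_dvd_mul_iff_left (by positivity)).1 h1
  have a1 := (v l).isLt
  have a2 := (w l).isLt
  have h3 : ((v l).val : ℤ) - ((w l).val : ℤ) = 0 := by
    apply Int.eq_zero_of_abs_lt_dvd h2
    rw [abs_lt]
    have b1 : ((v l).val : ℤ) < 2 ^ (k - j) := by exact_mod_cast a1
    have b2 : ((w l).val : ℤ) < 2 ^ (k - j) := by exact_mod_cast a2
    constructor <;> omega
  apply Fin.ext
  omega

lemma dvd_eq {d x y : ℤ} (h : d ∣ x) (e : y = x) : d ∣ y := e ▸ h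

lemma dvd_pow_trans {a b : ℕ} {x : ℤ} (h : (2 : ℤ) ^ b ∣ x) (hab : a ≤ b) : (2 : ℤ) ^ a ∣ x :=
  (pow_dvd_pow 2 hab).trans h

lemma pow_mul_dvd {a b c : ℕ} {x : ℤ} (h : (2 : ℤ) ^ b ∣ x) (hab : c ≤ a + b) :
    (2 : ℤ) ^ c ∣ 2 ^ a * x := by
  refine dvd_pow_trans ?_ hab
  rw [pow_add]
  exact mul_dvd_mul_left _ h

lemma arith_fin {k j s N : ℕ} (ν b : ℕ) (hj : j ≤ k) (hs : s ≤ k)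
    (h : 2 ^ b * (2 ^ (k - j)) ^ 4 ≤ 2 ^ (k - s) * N) (hν : 4 * j ≤ ν + 2 + s + b) :
    2 ^ (3 * k) ≤ 2 ^ (ν + 2) * N := by
  have h1 : 2 ^ (4 * j + s) * (2 ^ b * (2 ^ (k - j)) ^ 4) ≤ 2 ^ (4 * j + s) * (2 ^ (k - s) * N) :=
    Nat.mul_le_mul_left _ h
  have e1 : 2 ^ (4 * j + s) * (2 ^ b * (2 ^ (k - j)) ^ 4) = 2 ^ (k + s + b) * 2 ^ (3 * k) := by
    rw [← pow_mul, ← pow_add, ← pow_add, ← pow_add]; congr 1; omega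
  have e2 : 2 ^ (4 * j + s) * (2 ^ (k - s) * N) = 2 ^ k * (2 ^ (4 * j) * N) := by
    rw [← mul_assoc, ← mul_assoc, ← pow_add, ← pow_add]; congr 2; omega
  have h2 : 2 ^ (4 * j) ≤ 2 ^ (ν + 2 + s + b) := Nat.pow_le_pow_right (by norm_num) hν
  rw [e1, e2] at h1
  have h3 : 2 ^ (k + s + b) * 2 ^ (3 * k) ≤ 2 ^ (k + s + b) * (2 ^ (ν + 2) * N) := by
    calc _ ≤ _ := h1
      _ ≤ 2 ^ k * (2 ^ (ν + 2 + s + b) * N) :=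
        Nat.mul_le_mul_left _ (Nat.mul_le_mul_right _ h2)
      _ = _ := by ring
  exact Nat.le_of_mul_le_mul_left h3 (by positivity)

lemma lemmaQ {A : Matrix (Fin 4) (Fin 4) ℤ} (hA : IsGram A) (n k ν a : ℕ) (hk : ν + 2 ≤ k)
    (ha : 2 * a + 1 ≤ ν) (x : Fin 4 → ℤ) (h1 : ∀ i, (2 : ℤ) ^ a ∣ (A.mulVec x) i)
    (i₀ : Fin 4) (h2 : ¬ (2 : ℤ) ^ (a + 1) ∣ (A.mulVec x) i₀)
    (hx : (2 : ℤ) ^ (2 * a + 1) ∣ Qval A x - n) :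
    2 ^ (3 * k) ≤ 2 ^ (ν + 2) * localCount A 2 n k := by
  have hl := line_lemma hA n k (2 * a + 1) (by omega) (ι := Fin 4 → Fin (2 ^ (k - (a + 1))))
    (fun w => x + (2 : ℤ) ^ (a + 1) • (fun l => ((w l).val : ℤ)))
    (by
      intro v w h
      apply fin_inj (by omega : a + 1 ≤ k)
      intro l
      have := h l
      simpa using this)
    ((2 : ℤ) ^ (a + 1) • Pi.single i₀ 1)
    (by
      rw [Qval_smul, ← pow_mul]
      exact Dvd.dvd.mul_right (pow_dvd_pow 2 (by omega)) _)
    (by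
      intro w
      rw [Qval_add hA, Qval_smul, bil_smul_right]
      have e1 : (2 : ℤ) ^ (2 * a + 1) ∣ 2 ^ (a + 1) * bil A x (fun l => ((w l).val : ℤ)) :=
        pow_mul_dvd (bil_dvd h1 _) (by omega)
      have e2 : (2 : ℤ) ^ (2 * a + 1) ∣ (2 ^ (a + 1)) ^ 2 * Qval A (fun l => ((w l).val : ℤ)) := by
        rw [← pow_mul]
        exact Dvd.dvd.mul_right (pow_dvd_pow 2 (by omega)) _
      have := dvd_add (dvd_add hx e2) e1
      exact dvd_eq this (by ring))
    (by
      intro w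
      rw [bil_smul_right, bil_add_left, bil_smul_left]
      refine pow_mul_dvd (b := a) (dvd_add (bil_dvd h1 _) ?_) (by omega)
      exact Dvd.dvd.mul_right (pow_dvd_pow 2 (by omega)) _)
    (by
      intro w h
      rw [bil_smul_right, bil_add_left, bil_smul_left, bil_single,
        show 2 * a + 1 + 1 = (a + 1) + (a + 1) by ring, pow_add,
        mul_dvd_mul_iff_left (by positivity)] at h
      exact h2 ((dvd_add_left (Dvd.intro _ rfl)).1 h))
  refine arith_fin (j := a + 1) (s := 2 * a + 1) ν 0 (by omega) (by omega) ?_ (by omega)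
  simpa using hl

lemma lemmaH {A : Matrix (Fin 4) (Fin 4) ℤ} (hA : IsGram A) (n k ν c : ℕ) (hk : ν + 2 ≤ k)
    (hc : c ≤ ν) (x y : Fin 4 → ℤ)
    (h1 : ∀ i, (2 : ℤ) ^ ((c + 1) / 2) ∣ (A.mulVec x) i)
    (h2 : ∀ i, (2 : ℤ) ^ ((c + 1) / 2) ∣ (A.mulVec y) i)
    (hx : (2 : ℤ) ^ (c + 1) ∣ Qval A x - n) (hy : (2 : ℤ) ^ c ∣ Qval A y)
    (hb1 : (2 : ℤ) ^ c ∣ bil A x y) (hb2 : ¬ (2 : ℤ) ^ (c + 1) ∣ bil A x y) :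
    2 ^ (3 * k) ≤ 2 ^ (ν + 2) * localCount A 2 n k := by
  have hy2 : (2 : ℤ) ^ (c + 1 + 1) ∣ Qval A ((2 : ℤ) • y) := by
    rw [Qval_smul]
    exact pow_mul_dvd hy (by omega)
  -- a good translate
  have good : ∀ z : Fin 4 → ℤ, (2 : ℤ) ^ (c + 1) ∣ Qval A z + bil A x z →
      (2 : ℤ) ^ (c + 1) ∣ bil A y z →
      (2 : ℤ) ^ (c + 1) ∣ Qval A (x + z) - n ∧ (2 : ℤ) ^ (c + 1) ∣ bil A (x + z) ((2 : ℤ) • y) ∧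
        ¬ (2 : ℤ) ^ (c + 1 + 1) ∣ bil A (x + z) ((2 : ℤ) • y) := by
    intro z hz1 hz2
    have e : bil A (x + z) y = bil A x y + bil A y z := by rw [bil_add_left, bil_comm hA z y]
    refine ⟨?_, ?_, ?_⟩
    · rw [Qval_add hA]
      have := dvd_add hx hz1
      exact dvd_eq this (by ring)
    · rw [bil_smul_right, e, pow_succ, mul_comm]
      exact mul_dvd_mul_left _ (dvd_add hb1 (dvd_pow_trans hz2 (by omega)))
    · rw [bil_smul_right, e, pow_succ, mul_comm, mul_dvd_mul_iff_left (by norm_num)]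
      intro h
      exact hb2 ((dvd_add_left hz2).1 h)
  rcases Nat.even_or_odd' c with ⟨h, hh | hh⟩
  · -- even case
    have hh' : (c + 1) / 2 = h := by omega
    rw [hh'] at h1 h2
    choose l hl using h1
    choose m hm using h2
    obtain ⟨z, ⟨i₀, hi₀⟩, hz1, hz2⟩ := two_zeros A l m
    have bx : ∀ w, bil A x w = 2 ^ h * ∑ i, l i * w i := by
      intro w
      simp only [bil, Finset.mul_sum, hl]
      exact Finset.sum_congr rfl fun i _ => by ring
    have bY : ∀ w, bil A y w = 2 ^ h * ∑ i, m i * w i := by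
      intro w
      simp only [bil, Finset.mul_sum, hm]
      exact Finset.sum_congr rfl fun i _ => by ring
    have key : ∀ (b : Fin 2) (w : Fin 4 → ℤ),
        (2 : ℤ) ^ (c + 1) ∣ Qval A ((2 : ℤ) ^ h • ((b.val : ℤ) • z + (2 : ℤ) • w))
          + bil A x ((2 : ℤ) ^ h • ((b.val : ℤ) • z + (2 : ℤ) • w)) ∧
        (2 : ℤ) ^ (c + 1) ∣ bil A y ((2 : ℤ) ^ h • ((b.val : ℤ) • z + (2 : ℤ) • w)) := by
      intro b w
      have s1 : ∀ r : Fin 4 → ℤ, ∑ i, r i * ((b.val : ℤ) • z + (2 : ℤ) • w) i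
          = b.val * (∑ i, r i * z i) + 2 * ∑ i, r i * w i := by
        intro r
        rw [Finset.mul_sum, Finset.mul_sum, ← Finset.sum_add_distrib]
        exact Finset.sum_congr rfl fun i _ => by simp; ring
      have ec : (2 : ℤ) ^ (c + 1) = 2 ^ h * 2 ^ h * 2 := by rw [hh]; ring
      constructor
      · rw [Qval_smul, bil_smul_right, bx, s1, Qval_add hA, Qval_smul, Qval_smul, bil_smul_right,
          ec]
        have : (2 : ℤ) ∣ ((b.val : ℤ) ^ 2 * Qval A z + 2 ^ 2 * Qval A w
            + 2 * bil A ((b.val : ℤ) • z) w) + (b.val * (∑ i, l i * z i) + 2 * ∑ i, l i * w i) := by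
          have hbb : (b.val : ℤ) ^ 2 = b.val := by
            fin_cases b <;> simp
          rw [hbb]
          obtain ⟨q, hq⟩ := hz1
          exact ⟨b.val * q + 2 * Qval A w + bil A ((b.val : ℤ) • z) w + ∑ i, l i * w i, by
            linear_combination (b.val : ℤ) * hq⟩
        have := mul_dvd_mul_left ((2 : ℤ) ^ h * 2 ^ h) this
        exact dvd_eq this (by ring)
      · rw [bil_smul_right, bY, s1, ec]
        have : (2 : ℤ) ∣ b.val * (∑ i, m i * z i) + 2 * ∑ i, m i * w i :=
          dvd_add (Dvd.dvd.mul_left hz2 _) (Dvd.intro _ rfl)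
        have := mul_dvd_mul_left ((2 : ℤ) ^ h * 2 ^ h) this
        exact dvd_eq this (by ring)
    have hL := line_lemma hA n k (c + 1) (by omega)
      (ι := Fin 2 × (Fin 4 → Fin (2 ^ (k - (h + 1)))))
      (fun w => x + (2 : ℤ) ^ h • ((w.1.val : ℤ) • z + (2 : ℤ) • (fun l => ((w.2 l).val : ℤ))))
      (by
        rintro ⟨b, v⟩ ⟨b', w⟩ hd
        have hbb : b = b' := by
          by_contra hne
          have h3 := hd i₀
          simp only [Pi.add_apply, Pi.smul_apply, smul_eq_mul, add_sub_add_left_eq_sub] at h3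
          rw [← mul_sub] at h3
          have h4 : (2 : ℤ) ^ (h + 1) ∣ _ := dvd_pow_trans h3 (by omega)
          rw [pow_succ, mul_dvd_mul_iff_left (by positivity)] at h4
          have h5 : (2 : ℤ) ∣ (b.val : ℤ) * z i₀ - b'.val * z i₀ := by
            have : (2 : ℤ) ∣ 2 * (v i₀).val - 2 * (w i₀).val :=
              dvd_sub (Dvd.intro _ rfl) (Dvd.intro _ rfl)
            have := dvd_sub h4 this
            exact dvd_eq this (by ring)
          apply hi₀
          fin_cases b <;> fin_cases b' <;> simp_all
        subst hbb
        congr 1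
        apply fin_inj (by omega : h + 1 ≤ k)
        intro l
        have h3 := hd l
        simp only [Pi.add_apply, Pi.smul_apply, smul_eq_mul, add_sub_add_left_eq_sub] at h3
        exact dvd_eq h3 (by ring))
      ((2 : ℤ) • y) hy2
      (fun w => (good _ (key _ _).1 (key _ _).2).1)
      (fun w => (good _ (key _ _).1 (key _ _).2).2.1)
      (fun w => (good _ (key _ _).1 (key _ _).2).2.2)
    refine arith_fin (j := h + 1) (s := c + 1) ν 1 (by omega) (by omega) ?_ (by omega)
    simpa using hL
  · have hh' : (c + 1) / 2 = h + 1 := by omega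
    rw [hh'] at h1 h2
    have key : ∀ (w : Fin 4 → ℤ), (2 : ℤ) ^ (c + 1) ∣ Qval A ((2 : ℤ) ^ (h + 1) • w)
          + bil A x ((2 : ℤ) ^ (h + 1) • w) ∧
        (2 : ℤ) ^ (c + 1) ∣ bil A y ((2 : ℤ) ^ (h + 1) • w) := by
      intro w
      constructor
      · rw [Qval_smul, bil_smul_right, ← pow_mul]
        exact dvd_add (Dvd.dvd.mul_right (pow_dvd_pow 2 (by omega)) _)
          (pow_mul_dvd (bil_dvd h1 _) (by omega))
      · rw [bil_smul_right]
        exact pow_mul_dvd (bil_dvd h2 _) (by omega)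
    have hL := line_lemma hA n k (c + 1) (by omega)
      (ι := Fin 4 → Fin (2 ^ (k - (h + 1))))
      (fun w => x + (2 : ℤ) ^ (h + 1) • (fun l => ((w l).val : ℤ)))
      (by
        intro v w hd
        apply fin_inj (by omega : h + 1 ≤ k)
        intro l
        have := hd l
        simpa using this)
      ((2 : ℤ) • y) hy2
      (fun w => (good _ (key _).1 (key _).2).1)
      (fun w => (good _ (key _).1 (key _).2).2.1)
      (fun w => (good _ (key _).1 (key _).2).2.2)
    refine arith_fin (j := h + 1) (s := c + 1) ν 0 (by omega) (by omega) ?_ (by omega)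
    simpa using hL

lemma lemmaP {A B : Matrix (Fin 4) (Fin 4) ℤ} (hA : IsGram A) (n k ν N₀ : ℕ) (hk : ν + 2 ≤ k)
    (hN₀ : Odd N₀) (hAB : A * B = ((2 ^ ν * N₀ : ℕ) : ℤ) • (1 : Matrix (Fin 4) (Fin 4) ℤ))
    (hB : ∀ i, 2 ∣ B i i) (x : Fin 4 → ℤ) (i₀ : Fin 4) (hi : ¬ 2 ∣ x i₀)
    (hx : (2 : ℤ) ^ (ν + 1) ∣ Qval A x - n) :
    2 ^ (3 * k) ≤ 2 ^ (ν + 2) * localCount A 2 n k := by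
  rcases val_cases (A.mulVec x) ((ν + 1) / 2) with h | ⟨a, ha, h1, i, h2⟩
  · have hAy : A.mulVec (fun i => B i i₀) = fun i => (2 ^ ν * N₀ : ℤ) * (if i = i₀ then 1 else 0) := by
      funext i
      have := congrFun (congrFun hAB i) i₀
      simp only [Matrix.mul_apply, Matrix.smul_apply, Matrix.one_apply, smul_eq_mul] at this
      simp only [Matrix.mulVec, dotProduct]
      rw [this]; push_cast; rfl
    have hbxy : ∀ z, bil A (fun i => B i i₀) z = (2 ^ ν * N₀ : ℤ) * z i₀ := by
      intro z
      simp [bil, hAy]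
    refine lemmaH hA n k ν ν hk le_rfl x (fun i => B i i₀) h ?_ hx ?_ ?_ ?_
    · intro i
      rw [hAy]
      simp only [mul_assoc]
      exact Dvd.dvd.mul_right (pow_dvd_pow 2 (by omega)) _
    · have h1 := bil_self hA (fun i => B i i₀)
      rw [hbxy] at h1
      obtain ⟨b, hb⟩ := hB i₀
      simp only [hb] at h1
      exact ⟨N₀ * b, by linarith⟩
    · rw [bil_comm hA, hbxy, mul_assoc]
      exact Dvd.intro _ rfl
    · rw [bil_comm hA, hbxy, mul_assoc, pow_succ, mul_dvd_mul_iff_left (by positivity)]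
      intro h
      rcases Int.prime_two.dvd_mul.1 h with h | h
      · have : (2 : ℕ) ∣ N₀ := by exact_mod_cast h
        rcases hN₀ with ⟨r, hr⟩
        omega
      · exact hi h
  · exact lemmaQ hA n k ν a hk (by omega) x h1 i h2 (dvd_pow_trans hx (by omega))

lemma lower {A B : Matrix (Fin 4) (Fin 4) ℤ} (hA : IsGram A) (n k ν N₀ : ℕ) (hk : ν + 2 ≤ k)
    (hN₀ : Odd N₀) (hAB : A * B = ((2 ^ ν * N₀ : ℕ) : ℤ) • (1 : Matrix (Fin 4) (Fin 4) ℤ))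
    (hB : ∀ i, 2 ∣ B i i) (x v : Fin 4 → ℤ) (i₀ : Fin 4) (hi : ¬ 2 ∣ v i₀)
    (hx : (2 : ℤ) ^ (ν + 1) ∣ Qval A x - n) (hv : (2 : ℤ) ^ (ν + 1) ∣ Qval A v) :
    2 ^ (3 * k) ≤ 2 ^ (ν + 2) * localCount A 2 n k := by
  rcases val_cases (A.mulVec x) ((ν + 1) / 2) with h | ⟨a, ha, h1, i, h2⟩
  · have hxv : Qval A (x + v) - n = (Qval A x - n) + Qval A v + bil A x v := by
      rw [Qval_add hA]; ring
    rcases val_cases (fun _ => bil A x v) (ν + 1) with hb | ⟨c, hc, hb1, _, hb2⟩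
    · by_cases hx2 : ∃ i, ¬ 2 ∣ x i
      · obtain ⟨i, hi⟩ := hx2
        exact lemmaP hA n k ν N₀ hk hN₀ hAB hB x i hi hx
      · push Not at hx2
        refine lemmaP hA n k ν N₀ hk hN₀ hAB hB (x + v) i₀ ?_ ?_
        · intro h3
          exact hi ((dvd_add_right (hx2 i₀)).1 h3)
        · rw [hxv]
          exact dvd_add (dvd_add hx hv) (hb 0)
    · have hb1 : (2 : ℤ) ^ c ∣ bil A x v := hb1 0
      rcases val_cases (A.mulVec v) ((c + 1) / 2) with h' | ⟨m, hm, hm1, j, hm2⟩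
      · exact lemmaH hA n k ν c hk (by omega) x v (fun i => dvd_pow_trans (h i) (by omega)) h'
          (dvd_pow_trans hx (by omega)) (dvd_pow_trans hv (by omega)) hb1 hb2
      · refine lemmaQ hA n k ν m hk (by omega) (x + v) ?_ j ?_ ?_
        · intro i
          rw [Matrix.mulVec_add]
          exact dvd_add (dvd_pow_trans (h i) (by omega)) (hm1 i)
        · rw [Matrix.mulVec_add]
          intro h3
          exact hm2 ((dvd_add_right (dvd_pow_trans (h j) (by omega))).1 h3)
        · rw [hxv]
          exact dvd_add (dvd_add (dvd_pow_trans hx (by omega)) (dvd_pow_trans hv (by omega)))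
            (dvd_pow_trans hb1 (by omega))
  · exact lemmaQ hA n k ν a hk (by omega) x h1 i h2 (dvd_pow_trans hx (by omega))

lemma approx (A : Matrix (Fin 4) (Fin 4) ℤ) (j : ℕ) (hj : 1 ≤ j) (x : Fin 4 → ℤ_[2]) (n : ℕ)
    (hx : Qval A x = (n : ℤ_[2])) :
    ∃ X : Fin 4 → ℤ, (2 : ℤ) ^ j ∣ Qval A X - n ∧ ∀ i, x i = 1 → ¬ 2 ∣ X i := by
  choose X hX using fun i => ZMod.intCast_surjective (PadicInt.toZModPow j (x i))
  refine ⟨X, ?_, ?_⟩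
  · have h1 := Qval_map (PadicInt.toZModPow j) A x
    have h2 := Qval_map (Int.castRingHom (ZMod (2 ^ j))) A X
    simp only [eq_intCast, hX] at h2
    rw [h2, hx, map_natCast] at h1
    have := (ZMod.intCast_zmod_eq_zero_iff_dvd (Qval A X - n) (2 ^ j)).1
      (by push_cast; rw [h1, sub_self])
    exact_mod_cast this
  · intro i hi h2
    have h3 := hX i
    rw [hi, map_one, ← sub_eq_zero] at h3
    have h4 := (ZMod.intCast_zmod_eq_zero_iff_dvd (X i - 1) (2 ^ j)).1 (by push_cast; exact h3)
    have h5 : (2 : ℤ) ∣ X i - 1 := by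
      refine dvd_trans ?_ h4
      push_cast
      exact dvd_pow_self 2 (by omega)
    omega

lemma iso_prim (A : Matrix (Fin 4) (Fin 4) ℤ)
    (hiso : ∃ x : Fin 4 → ℚ_[2], x ≠ 0 ∧ Qval A x = 0) :
    ∃ v : Fin 4 → ℤ_[2], Qval A v = 0 ∧ ∃ i, v i = 1 := by
  obtain ⟨x, hx, hq⟩ := hiso
  obtain ⟨i, -, hi⟩ := Finset.exists_max_image Finset.univ (fun i => ‖x i‖) Finset.univ_nonempty
  have hxi : x i ≠ 0 := by
    intro h0
    apply hx
    funext j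
    have := hi j (Finset.mem_univ j)
    rw [h0, norm_zero] at this
    exact norm_le_zero_iff.1 this
  let v : Fin 4 → ℤ_[2] := fun j => ⟨(x i)⁻¹ * x j, by
    rw [norm_mul, norm_inv]
    have h1 := hi j (Finset.mem_univ j)
    have h2 : 0 < ‖x i‖ := norm_pos_iff.2 hxi
    rw [inv_mul_le_iff₀ h2]
    simpa using h1⟩
  refine ⟨v, ?_, i, ?_⟩
  · have h1 := Qval_map (PadicInt.Coe.ringHom (p := 2)) A v
    have h2 : (fun j => PadicInt.Coe.ringHom (p := 2) (v j)) = (x i)⁻¹ • x := by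
      funext j
      rfl
    rw [h2, Qval_smul, hq, mul_zero] at h1
    exact Subtype.coe_injective h1.symm
  · apply Subtype.coe_injective
    simp [v, hxi]

lemma level_mul {A : Matrix (Fin 4) (Fin 4) ℤ} (hpd : PosDefQF A) {N : ℕ} (hN : IsLevel A N) :
    ∃ B : Matrix (Fin 4) (Fin 4) ℤ, A * B = (N : ℤ) • (1 : Matrix (Fin 4) (Fin 4) ℤ) ∧
      ∀ i, 2 ∣ B i i := by
  obtain ⟨-, ⟨B, hB, hd⟩, -⟩ := hN
  refine ⟨B, ?_, hd⟩
  have hdet : A.det ≠ 0 := by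
    have h1 := hpd.det_pos
    intro h0
    have : (A.map (Int.cast : ℤ → ℝ)).det = ((A.det : ℤ) : ℝ) :=
      (RingHom.map_det (Int.castRingHom ℝ) A).symm
    rw [this, h0] at h1
    simp at h1
  have hdetQ : IsUnit (A.map (Int.cast : ℤ → ℚ)).det := by
    have : (A.map (Int.cast : ℤ → ℚ)).det = ((A.det : ℤ) : ℚ) :=
      (RingHom.map_det (Int.castRingHom ℚ) A).symm
    rw [this]
    exact isUnit_iff_ne_zero.2 (by exact_mod_cast hdet)
  have h2 : A.map (Int.cast : ℤ → ℚ) * B.map (Int.cast : ℤ → ℚ) = (N : ℚ) • 1 := by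
    rw [hB, Matrix.mul_smul, Matrix.mul_nonsing_inv _ hdetQ]
  ext i j
  have h3 := congrFun (congrFun h2 i) j
  simp only [Matrix.mul_apply, Matrix.map_apply, Matrix.smul_apply, Matrix.one_apply,
    smul_eq_mul] at h3 ⊢
  have h4 : ((∑ l, A i l * B l j : ℤ) : ℚ) = (((N : ℤ) * if i = j then 1 else 0 : ℤ) : ℚ) := by
    push_cast; exact h3
  exact_mod_cast h4

lemma unit_sq (n : ℕ) (hn : 0 < n) : ∃ K, ∀ k ≥ K, ∃ u : (ZMod (2 ^ (k + 1)))ˣ,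
    (u : ZMod (2 ^ (k + 1))) ^ 2 * n = n + 2 ^ k := by
  obtain ⟨e, m, hm, rfl⟩ := Nat.exists_eq_two_pow_mul_odd hn.ne'
  refine ⟨e + 3, fun k hk => ?_⟩
  obtain ⟨d, rfl⟩ : ∃ d, k = e + 3 + d := ⟨k - (e + 3), by omega⟩
  obtain ⟨r, rfl⟩ := hm
  have hcop : Nat.Coprime (1 + 2 ^ (2 + d)) (2 ^ (e + 3 + d + 1)) := by
    apply Nat.Coprime.pow_right
    rw [Nat.coprime_two_right]
    exact odd_one.add_even ((Nat.even_pow).2 ⟨even_two, by omega⟩)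
  refine ⟨ZMod.unitOfCoprime _ hcop, ?_⟩
  rw [ZMod.coe_unitOfCoprime]
  have h0 : (2 : ZMod (2 ^ (e + 3 + d + 1))) ^ (e + 3 + d + 1) = 0 := by
    have := ZMod.natCast_self (2 ^ (e + 3 + d + 1))
    exact_mod_cast this
  push_cast
  linear_combination ((r : ZMod (2 ^ (e + 3 + d + 1))) + (2 * r + 1) * 2 ^ d) * h0

lemma count_succ (A : Matrix (Fin 4) (Fin 4) ℤ) (n : ℕ) (k : ℕ) (u : (ZMod (2 ^ (k + 1)))ˣ)
    (hu : (u : ZMod (2 ^ (k + 1))) ^ 2 * n = n + 2 ^ k) :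
    localCount A 2 n (k + 1) = 8 * localCount A 2 n k := by
  classical
  let R := ZMod (2 ^ (k + 1))
  let S := ZMod (2 ^ k)
  let π : R →+* S := ZMod.castHom (pow_dvd_pow 2 (Nat.le_succ k)) S
  have hπ : Function.Surjective π := ZMod.castHom_surjective _
  let pr : (Fin 4 → R) →+ (Fin 4 → S) :=
    { toFun := fun x i => π (x i)
      map_zero' := by funext i; simp
      map_add' := by intro x y; funext i; simp }
  have hpr : Function.Surjective pr := by
    intro y
    choose x hx using fun i => hπ (y i)
    exact ⟨x, funext hx⟩
  have hcR : Fintype.card (Fin 4 → R) = (2 ^ (k + 1)) ^ 4 := by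
    simp [R, ZMod.card]
  have hcS : Fintype.card (Fin 4 → S) = (2 ^ k) ^ 4 := by
    simp [S, ZMod.card]
  have hfib0 : ∀ y, Finset.card {g | pr g = y} = Finset.card {g | pr g = 0} := fun y =>
    AddMonoidHom.card_fiber_eq_of_mem_range pr (hpr y) (hpr 0)
  have hfib : ∀ y, Finset.card {g | pr g = y} = 16 := by
    have h1 := Finset.card_eq_sum_card_fiberwise (s := (Finset.univ : Finset (Fin 4 → R)))
      (t := (Finset.univ : Finset (Fin 4 → S))) (f := pr) (fun x _ => by simp)
    rw [Finset.sum_congr rfl (fun y _ => hfib0 y), Finset.sum_const, Finset.card_univ,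
      Finset.card_univ, hcR, hcS, smul_eq_mul] at h1
    intro y
    rw [hfib0]
    have h2 : (2 ^ (k + 1)) ^ 4 = (2 ^ k) ^ 4 * 16 := by ring
    rw [h2] at h1
    exact (Nat.eq_of_mul_eq_mul_left (by positivity) h1).symm
  let T : Finset (Fin 4 → R) := {x | π (Qval A x) = n}
  let T0 : Finset (Fin 4 → R) := {x | Qval A x = n}
  let T1 : Finset (Fin 4 → R) := {x | Qval A x = n + 2 ^ k}
  let U : Finset (Fin 4 → S) := {x | Qval A x = n}
  have hU : localCount A 2 n k = U.card := by
    rw [localCount, Nat.card_eq_fintype_card, Fintype.card_subtype]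
  have hT0 : localCount A 2 n (k + 1) = T0.card := by
    rw [localCount, Nat.card_eq_fintype_card, Fintype.card_subtype]
  have hmap : ∀ x, Qval A (pr x) = π (Qval A x) := fun x => Qval_map π A x
  have hT : T.card = 16 * U.card := by
    rw [Finset.card_eq_sum_card_fiberwise (s := T) (t := U) (f := pr)]
    · rw [Finset.sum_congr rfl (g := fun _ => 16), Finset.sum_const, smul_eq_mul, mul_comm]
      intro y hy
      rw [← hfib y]
      congr 1
      ext g
      simp only [T, U, Finset.mem_filter, Finset.mem_univ, true_and] at hy ⊢
      constructor
      · exact fun h => h.2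
      · intro h
        exact ⟨by rw [← hmap, h, hy], h⟩
    · intro x hx
      simp only [T, U, Finset.coe_filter, Finset.mem_univ, true_and, Set.mem_setOf_eq] at hx ⊢
      rw [hmap, hx]
  have h2k : (2 : R) ^ k + 2 ^ k = 0 := by
    have := ZMod.natCast_self (2 ^ (k + 1))
    push_cast at this
    rw [← this]; ring
  have hne : (2 : R) ^ k ≠ 0 := by
    intro h
    have h' : ((2 ^ k : ℕ) : ZMod (2 ^ (k + 1))) = 0 := by exact_mod_cast h
    rw [ZMod.natCast_eq_zero_iff] at h'
    have := Nat.le_of_dvd (by positivity) h'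
    have h3 : 2 ^ (k + 1) = 2 * 2 ^ k := by ring
    have h4 : 0 < 2 ^ k := by positivity
    omega
  have hker : ∀ r : R, π r = 0 ↔ r = 0 ∨ r = 2 ^ k := by
    intro r
    constructor
    · intro h
      obtain ⟨z, rfl⟩ := ZMod.intCast_surjective r
      rw [map_intCast] at h
      obtain ⟨q, rfl⟩ := (ZMod.intCast_zmod_eq_zero_iff_dvd _ _).1 h
      rcases Int.even_or_odd' q with ⟨s, rfl | rfl⟩
      · left
        push_cast
        linear_combination (s : R) * h2k
      · right
        push_cast
        linear_combination (s : R) * h2k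
    · rintro (rfl | rfl)
      · simp
      · have := ZMod.natCast_self (2 ^ k)
        rw [map_pow, map_ofNat]
        exact_mod_cast this
  have hunion : T = T0 ∪ T1 := by
    ext x
    simp only [T, T0, T1, Finset.mem_union, Finset.mem_filter, Finset.mem_univ, true_and]
    have := hker (Qval A x - n)
    rw [map_sub, map_natCast, sub_eq_zero, sub_eq_zero, sub_eq_iff_eq_add'] at this
    exact this
  have hdisj : Disjoint T0 T1 := by
    rw [Finset.disjoint_left]
    intro x h0 h1
    simp only [T0, T1, Finset.mem_filter, Finset.mem_univ, true_and] at h0 h1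
    rw [h0] at h1
    exact hne (by simpa using h1.symm)
  have hcard : T0.card = T1.card := by
    refine Finset.card_bij' (fun x _ => (u : R) • x) (fun x _ => ((u⁻¹ : Rˣ) : R) • x) ?_ ?_ ?_ ?_
    · intro x hx
      simp only [T0, T1, Finset.mem_filter, Finset.mem_univ, true_and] at hx ⊢
      rw [Qval_smul, hx]
      exact hu
    · intro x hx
      simp only [T0, T1, Finset.mem_filter, Finset.mem_univ, true_and] at hx ⊢
      rw [Qval_smul, hx]
      have : (n : R) + 2 ^ k = (u : R) ^ 2 * n := hu.symm
      rw [this, ← mul_assoc, ← mul_pow, Units.inv_mul, one_pow, one_mul]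
    · intro x _
      simp [smul_smul]
    · intro x _
      simp [smul_smul]
  rw [hunion, Finset.card_union_of_disjoint hdisj, ← hcard] at hT
  omega

lemma density_exists (A : Matrix (Fin 4) (Fin 4) ℤ) (n : ℕ) (hn : 0 < n) :
    ∃ β : ℝ, Filter.Tendsto (fun k => (localCount A 2 n k : ℝ) / ((2 : ℕ) : ℝ) ^ (3 * k))
      Filter.atTop (nhds β) := by
  obtain ⟨K, hK⟩ := unit_sq n hn
  refine ⟨(localCount A 2 n K : ℝ) / ((2 : ℕ) : ℝ) ^ (3 * K), ?_⟩
  apply tendsto_const_nhds.congr'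
  filter_upwards [Filter.eventually_ge_atTop K] with k hk
  induction k, hk using Nat.le_induction with
  | base => rfl
  | succ k hk ih =>
    obtain ⟨u, hu⟩ := hK k hk
    rw [ih, count_succ A n k u hu]
    push_cast
    rw [show 3 * (k + 1) = 3 * k + 3 by ring, pow_add]
    field_simp
    norm_num

/-- Isotropic case bound (p = 2): if `Q` is isotropic over `ℚ_2` and `n` is
represented over `ℤ_2` then `β_2(Q;n) ≥ 2^(-2 - ord_2(N(Q)))`. -/
theorem local_density_isotropic_two
    (A : Matrix (Fin 4) (Fin 4) ℤ) (N n : ℕ)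
    (hA : IsGram A) (hprim : IsPrimitiveQF A) (hpd : PosDefQF A)
    (hN : IsLevel A N) (hn : 0 < n)
    (hiso : ∃ x : Fin 4 → ℚ_[2], x ≠ 0 ∧ Qval A x = 0)
    (h : ∃ x : Fin 4 → ℤ_[2], Qval A x = (n : ℤ_[2])) :
    DensityBound A 2 n ((2 : ℝ) ^ (-(2 : ℝ) - (N.factorization 2 : ℝ))) := by
  obtain ⟨β, hβ⟩ := density_exists A n hn
  refine ⟨β, hβ, ?_⟩
  obtain ⟨B, hAB, hB⟩ := level_mul hpd hN
  have hN0 : N ≠ 0 := hN.1.ne'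
  set ν := N.factorization 2 with hν
  obtain ⟨N₀, hNe⟩ : ∃ N₀, N = 2 ^ ν * N₀ := ⟨_, (Nat.ordProj_mul_ordCompl_eq_self N 2).symm⟩
  have hodd : Odd N₀ := by
    have h1 : N₀ = N / 2 ^ ν := by
      rw [hNe, Nat.mul_div_cancel_left _ (by positivity)]
    rw [h1, ← Nat.not_even_iff_odd, even_iff_two_dvd]
    exact Nat.not_dvd_ordCompl Nat.prime_two hN0
  rw [hNe] at hAB
  obtain ⟨x, hx⟩ := h
  obtain ⟨X, hX, -⟩ := approx A (ν + 1) (by omega) x n hx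
  obtain ⟨v, hv, i, hvi⟩ := iso_prim A hiso
  obtain ⟨V, hV, hV1⟩ := approx A (ν + 1) (by omega) v 0 (by rw [hv]; simp)
  refine ge_of_tendsto hβ ?_
  filter_upwards [Filter.eventually_ge_atTop (ν + 2)] with k hk
  have hl := lower hA n k ν N₀ hk hodd hAB hB X V i (hV1 i hvi) hX (by simpa using hV)
  have hl' : (2 : ℝ) ^ (3 * k) ≤ 2 ^ (ν + 2) * (localCount A 2 n k : ℝ) := by exact_mod_cast hl
  have e : (2 : ℝ) ^ (-(2 : ℝ) - (ν : ℝ)) = ((2 : ℝ) ^ (ν + 2))⁻¹ := by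
    rw [← Real.rpow_natCast, ← Real.rpow_neg (by norm_num)]
    congr 1
    push_cast; ring
  rw [e, Nat.cast_ofNat, le_div_iff₀ (by positivity), inv_mul_le_iff₀ (by positivity)]
  exact hl'
end
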